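/- Guerra's broken replica symmetry bound: for every N ≥ 1, β ≥ 0, h ∈ ℝ, and every piecewise constant functional order parameter x, the quenched free energy of the SK model satisfies N⁻¹ E log Z_N(β,h,J) ≤ ᾱ(β,h;x). -/

import Mathlib

open MeasureTheory ProbabilityTheory Filter

noncomputable section

/-! ## Gaussian disorder -/

/-- The standard (centered, unit variance) Gaussian measure on `ℝ`. -/
def stdGauss : Measure ℝ := gaussianReal 0 1

instance : IsProbabilityMeasure stdGauss := by unfold stdGauss; infer_instance

/-- `N` i.i.d. standard Gaussian variables. -/
def gaussN (N : ℕ) : Measure (Fin N → ℝ) := Measure.pi fun _ => stdGauss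

instance (N : ℕ) : IsProbabilityMeasure (gaussN N) := by unfold gaussN; infer_instance

/-- The i.i.d. standard Gaussian couplings `J_{ij}` (only entries with `i < j` are used). -/
def gaussC (N : ℕ) : Measure (Fin N → Fin N → ℝ) := Measure.pi fun _ => gaussN N

instance (N : ℕ) : IsProbabilityMeasure (gaussC N) := by unfold gaussC; infer_instance

/-- The i.i.d. standard Gaussian one-body fields `J_i^a`, `a = 1, …, K`
(row `⟨a-1⟩ : Fin K` corresponds to the level `a` of the paper). -/
def gaussS (K N : ℕ) : Measure (Fin K → Fin N → ℝ) := Measure.pi fun _ => gaussN N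

instance (K N : ℕ) : IsProbabilityMeasure (gaussS K N) := by unfold gaussS; infer_instance

/-- I.i.d. standard Gaussian couplings indexed by subsets of sites, for the p-spin model
(only the cardinality-`p` subsets are used). -/
def gaussP (N : ℕ) : Measure (Finset (Fin N) → ℝ) := Measure.pi fun _ => stdGauss

instance (N : ℕ) : IsProbabilityMeasure (gaussP N) := by unfold gaussP; infer_instance

/-! ## Spins and overlaps -/

/-- The spin value (`±1`) of a Boolean configuration entry. -/
def spin (b : Bool) : ℝ := if b then 1 else -1

/-- The overlap `q₁₂ = N⁻¹ ∑ᵢ σᵢ⁽¹⁾ σᵢ⁽²⁾` of two replicas. -/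
def overlap (N : ℕ) (σ τ : Fin N → Bool) : ℝ := (N : ℝ)⁻¹ * ∑ i, spin (σ i) * spin (τ i)

/-! ## Piecewise constant functional order parameters and the Parisi function -/

/-- One backward step of the Parisi recursion on an interval of constancy of the
functional order parameter: from `g = f(q_a, ·)`, with value `m` of the order parameter
and `s = q_a - q`, produce `f(q, ·)`. -/
def pStep (m s : ℝ) (g : ℝ → ℝ) (y : ℝ) : ℝ :=
  if m = 0 then ∫ z, g (y + z * Real.sqrt s) ∂stdGauss
  else m⁻¹ * Real.log (∫ z, Real.exp (m * g (y + z * Real.sqrt s)) ∂stdGauss)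

/-- `parisiLevel K q m β j` is the Parisi function `f(q_{K-j}, ·; x, β)` at the node
`q_{K-j}`, obtained by `j` backward steps from the final condition `f(q_K, y) = log cosh (β y)`. -/
def parisiLevel (K : ℕ) (q m : ℕ → ℝ) (β : ℝ) : ℕ → ℝ → ℝ
  | 0 => fun y => Real.log (Real.cosh (β * y))
  | j + 1 => pStep (m (K - j)) (q (K - j) - q (K - j - 1)) (parisiLevel K q m β j)

/-- The Parisi function `f(r, y; x, β)` for a piecewise constant order parameter `x`
given by nodes `q` and values `m`:  for `q_{a-1} ≤ r ≤ q_a` it is obtained from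
`f(q_a, ·)` by one backward step with value `m_a` over a time `q_a - r`. -/
def parisiF (K : ℕ) (q m : ℕ → ℝ) (β : ℝ) (r y : ℝ) : ℝ :=
  pStep (m (sInf {a : ℕ | r ≤ q a})) (q (sInf {a : ℕ | r ≤ q a}) - r)
    (parisiLevel K q m β (K - sInf {a : ℕ | r ≤ q a})) y

/-- The functional order parameter as a function: `x(r) = m_a` for `q_{a-1} ≤ r < q_a`,
and `x(1) = m_K`. -/
def xFun (K : ℕ) (q m : ℕ → ℝ) (r : ℝ) : ℝ :=
  if 1 ≤ r then m K else m (sInf {a : ℕ | r < q a})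

/-- A piecewise constant functional order parameter:
`0 = q_0 ≤ q_1 ≤ … ≤ q_K = 1`, `0 ≤ m_1 ≤ … ≤ m_K ≤ 1`,
with the conventions `m_0 = 0`, `m_{K+1} = 1`. -/
structure OrderParam where
  K : ℕ
  hK : 1 ≤ K
  q : ℕ → ℝ
  m : ℕ → ℝ
  hq0 : q 0 = 0
  hqK : q K = 1
  hq_mono : ∀ a, a < K → q a ≤ q (a + 1)
  hm0 : m 0 = 0
  hmtop : m (K + 1) = 1
  hm1 : 0 ≤ m 1
  hm_mono : ∀ a, 1 ≤ a → a < K → m a ≤ m (a + 1)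
  hmK : m K ≤ 1

/-- Guerra's trial function `ᾱ(β, h; x) = log 2 + f(0, h; x, β) - (β²/2) ∫₀¹ r x(r) dr`. -/
def trialAlpha (K : ℕ) (q m : ℕ → ℝ) (β h : ℝ) : ℝ :=
  Real.log 2 + parisiLevel K q m β K h - β ^ 2 / 2 * ∫ r in (0 : ℝ)..1, r * xFun K q m r

/-! ## The Sherrington–Kirkpatrick model -/

/-- The SK Hamiltonian `H_N(σ, h, J) = -(1/√N) ∑_{i<j} J_{ij} σ_i σ_j - h ∑_i σ_i`. -/
def hamSK (N : ℕ) (h : ℝ) (Jc : Fin N → Fin N → ℝ) (σ : Fin N → Bool) : ℝ :=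
  -(1 / Real.sqrt N) * ∑ i, ∑ j, (if i < j then Jc i j * spin (σ i) * spin (σ j) else 0)
    - h * ∑ i, spin (σ i)

/-- The SK partition function `Z_N(β, h, J)`. -/
def ZSK (N : ℕ) (β h : ℝ) (Jc : Fin N → Fin N → ℝ) : ℝ :=
  ∑ σ : Fin N → Bool, Real.exp (-(β * hamSK N h Jc σ))

/-- The quenched average `N⁻¹ E log Z_N(β, h, J)`. -/
def quenchedFE (N : ℕ) (β h : ℝ) : ℝ :=
  (N : ℝ)⁻¹ * ∫ Jc, Real.log (ZSK N β h Jc) ∂gaussC N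

/-- The ground state energy density `e_N(J, h)`, defined by
`-e_N(J, h) = N⁻¹ min_σ H_N(σ, h, J)`. -/
def eGS (N : ℕ) (h : ℝ) (Jc : Fin N → Fin N → ℝ) : ℝ :=
  -((N : ℝ)⁻¹ * ⨅ σ : Fin N → Bool, hamSK N h Jc σ)

/-- The quenched ground state energy density `e_N(h) = E(e_N(J, h))`. -/
def eQuenched (N : ℕ) (h : ℝ) : ℝ := ∫ Jc, eGS N h Jc ∂gaussC N

/-! ## The interpolating system -/

/-- The interpolating Boltzmann factor. -/
def bFac (N K : ℕ) (β h t : ℝ) (q : ℕ → ℝ) (Jc : Fin N → Fin N → ℝ)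
    (Js : Fin K → Fin N → ℝ) (σ : Fin N → Bool) : ℝ :=
  Real.exp (β * Real.sqrt (t / N) *
        ∑ i, ∑ j, (if i < j then Jc i j * spin (σ i) * spin (σ j) else 0)
      + β * h * ∑ i, spin (σ i)
      + β * Real.sqrt (1 - t) *
          ∑ a : Fin K, Real.sqrt (q (a.val + 1) - q a.val) * ∑ i, Js a i * spin (σ i))

/-- The interpolating partition function `Z̃_N(β, h; t; x; J)`. -/
def Ztil (N K : ℕ) (β h t : ℝ) (q : ℕ → ℝ) (Jc : Fin N → Fin N → ℝ)
    (Js : Fin K → Fin N → ℝ) : ℝ :=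
  ∑ σ : Fin N → Bool, bFac N K β h t q Jc Js σ

/-- `Wrec … j` is the random variable `Z_{K-j}`:  `Z_K = Z̃_N` and
`Z_{a-1} = (E_a (Z_a^{m_a}))^{1/m_a}`, where `E_a` integrates the Gaussian row `J^a`. -/
def Wrec (N K : ℕ) (β h t : ℝ) (q m : ℕ → ℝ) :
    ℕ → (Fin N → Fin N → ℝ) → (Fin K → Fin N → ℝ) → ℝ
  | 0 => Ztil N K β h t q
  | j + 1 => fun Jc Js =>
      if hj : j < K then
        (∫ g : Fin N → ℝ,
            (Wrec N K β h t q m j Jc (Function.update Js ⟨K - 1 - j, by omega⟩ g)) ^ m (K - j)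
          ∂gaussN N) ^ (m (K - j))⁻¹
      else Wrec N K β h t q m j Jc Js

/-- `Zrec … a` is the random variable `Z_a` of the broken replica interpolation. -/
def Zrec (N K : ℕ) (β h t : ℝ) (q m : ℕ → ℝ) (a : ℕ) :
    (Fin N → Fin N → ℝ) → (Fin K → Fin N → ℝ) → ℝ :=
  Wrec N K β h t q m (K - a)

/-- The interpolating auxiliary function `α̃_N(t) = N⁻¹ E₀ log Z₀`. -/
def atilde (N K : ℕ) (β h : ℝ) (q m : ℕ → ℝ) (t : ℝ) : ℝ :=
  (N : ℝ)⁻¹ * ∫ Jc, Real.log (Wrec N K β h t q m K Jc 0) ∂gaussC N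

/-- The normalized weight `f_a = Z_a^{m_a} / E_a(Z_a^{m_a}) = Z_a^{m_a} / Z_{a-1}^{m_a}`. -/
def fWeight (N K : ℕ) (β h t : ℝ) (q m : ℕ → ℝ) (a : ℕ) (Jc : Fin N → Fin N → ℝ)
    (Js : Fin K → Fin N → ℝ) : ℝ :=
  Zrec N K β h t q m a Jc Js ^ m a / Zrec N K β h t q m (a - 1) Jc Js ^ m a

/-- The Gibbs expectation `ω(A)` of the interpolating Boltzmann factor. -/
def gibbs (N K : ℕ) (β h t : ℝ) (q : ℕ → ℝ) (A : (Fin N → Bool) → ℝ)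
    (Jc : Fin N → Fin N → ℝ) (Js : Fin K → Fin N → ℝ) : ℝ :=
  (∑ σ : Fin N → Bool, A σ * bFac N K β h t q Jc Js σ) / Ztil N K β h t q Jc Js

/-- The two-replica Gibbs product expectation `Ω(A)`. -/
def gibbs2 (N K : ℕ) (β h t : ℝ) (q : ℕ → ℝ) (A : (Fin N → Bool) → (Fin N → Bool) → ℝ)
    (Jc : Fin N → Fin N → ℝ) (Js : Fin K → Fin N → ℝ) : ℝ :=
  (∑ σ : Fin N → Bool, ∑ τ : Fin N → Bool,
      A σ τ * bFac N K β h t q Jc Js σ * bFac N K β h t q Jc Js τ) /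
    Ztil N K β h t q Jc Js ^ 2

/-- `omT1 … A j` is the partially averaged state `ω̃_{K-j}(A)`:
`ω̃_K = ω` and `ω̃_{a-1}(·) = E_a (f_a ω̃_a(·))`. -/
def omT1 (N K : ℕ) (β h t : ℝ) (q m : ℕ → ℝ) (A : (Fin N → Bool) → ℝ) :
    ℕ → (Fin N → Fin N → ℝ) → (Fin K → Fin N → ℝ) → ℝ
  | 0 => gibbs N K β h t q A
  | j + 1 => fun Jc Js =>
      if hj : j < K then
        ∫ g : Fin N → ℝ,
          fWeight N K β h t q m (K - j) Jc (Function.update Js ⟨K - 1 - j, by omega⟩ g) *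
            omT1 N K β h t q m A j Jc (Function.update Js ⟨K - 1 - j, by omega⟩ g)
          ∂gaussN N
      else omT1 N K β h t q m A j Jc Js

/-- `omT2 … A j` is the partially averaged two-replica state `Ω̃_{K-j}(A)`:
`Ω̃_K = Ω` and `Ω̃_{a-1}(·) = E_a (f_a Ω̃_a(·))`. -/
def omT2 (N K : ℕ) (β h t : ℝ) (q m : ℕ → ℝ) (A : (Fin N → Bool) → (Fin N → Bool) → ℝ) :
    ℕ → (Fin N → Fin N → ℝ) → (Fin K → Fin N → ℝ) → ℝ
  | 0 => gibbs2 N K β h t q A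
  | j + 1 => fun Jc Js =>
      if hj : j < K then
        ∫ g : Fin N → ℝ,
          fWeight N K β h t q m (K - j) Jc (Function.update Js ⟨K - 1 - j, by omega⟩ g) *
            omT2 N K β h t q m A j Jc (Function.update Js ⟨K - 1 - j, by omega⟩ g)
          ∂gaussN N
      else omT2 N K β h t q m A j Jc Js

/-- The deformed quenched average `⟨A⟩_a = E(f_1 ⋯ f_a Ω̃_a(A))` at interpolation
parameter `t`, for a function `A` of two replicas. -/
def angA (N K : ℕ) (β h t : ℝ) (q m : ℕ → ℝ) (a : ℕ)
    (A : (Fin N → Bool) → (Fin N → Bool) → ℝ) : ℝ :=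
  ∫ Jc, ∫ Js,
      (∏ b ∈ Finset.Icc 1 a, fWeight N K β h t q m b Jc Js) *
        omT2 N K β h t q m A (K - a) Jc Js
    ∂gaussS K N ∂gaussC N

/-! ## Zero temperature (ground state) objects -/

/-- The zero-temperature Parisi recursion: `parisiLevelBar K q m j` is `f̄(q_{K-j}, ·; x̄)`,
with final condition `f̄(q_K, y) = |y|`. -/
def parisiLevelBar (K : ℕ) (q m : ℕ → ℝ) : ℕ → ℝ → ℝ
  | 0 => fun y => |y|
  | j + 1 => pStep (m (K - j)) (q (K - j) - q (K - j - 1)) (parisiLevelBar K q m j)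

/-- A zero-temperature piecewise constant order parameter: nodes
`0 = q_0 ≤ … ≤ q_K = 1` and nondecreasing values `0 ≤ m̄_1 ≤ … ≤ m̄_K`
(no upper bound `1`), with the convention `m̄_0 = 0`. -/
structure ZeroTParam where
  K : ℕ
  hK : 1 ≤ K
  q : ℕ → ℝ
  m : ℕ → ℝ
  hq0 : q 0 = 0
  hqK : q K = 1
  hq_mono : ∀ a, a < K → q a ≤ q (a + 1)
  hm0 : m 0 = 0
  hm1 : 0 ≤ m 1
  hm_mono : ∀ a, 1 ≤ a → a < K → m a ≤ m (a + 1)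

/-- The zero-temperature trial function `α̃(h; x̄) = f̄(0, h; x̄) - (1/2) ∫₀¹ r x̄(r) dr`. -/
def gsTrial (K : ℕ) (q m : ℕ → ℝ) (h : ℝ) : ℝ :=
  parisiLevelBar K q m K h - 1 / 2 * ∫ r in (0 : ℝ)..1, r * xFun K q m r

/-! ## The p-spin model -/

/-- A piecewise constant functional order parameter on `[0, p/2]`:
`0 = q_0 ≤ … ≤ q_K = p/2` and `0 ≤ m_1 ≤ … ≤ m_K ≤ 1`. -/
structure POrderParam (p : ℕ) where
  K : ℕ
  hK : 1 ≤ K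
  q : ℕ → ℝ
  m : ℕ → ℝ
  hq0 : q 0 = 0
  hqK : q K = p / 2
  hq_mono : ∀ a, a < K → q a ≤ q (a + 1)
  hm1 : 0 ≤ m 1
  hm_mono : ∀ a, 1 ≤ a → a < K → m a ≤ m (a + 1)
  hmK : m K ≤ 1

/-- The p-spin Hamiltonian
`H_N(σ,h,J) = -(p!/(2N^{p-1}))^{1/2} ∑_{i_1<…<i_p} J_{i_1…i_p} σ_{i_1}⋯σ_{i_p} - h ∑_i σ_i`. -/
def hamP (p N : ℕ) (h : ℝ) (J : Finset (Fin N) → ℝ) (σ : Fin N → Bool) : ℝ :=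
  -Real.sqrt ((Nat.factorial p : ℝ) / (2 * (N : ℝ) ^ (p - 1))) *
      ∑ S ∈ Finset.powersetCard p (Finset.univ : Finset (Fin N)), J S * ∏ i ∈ S, spin (σ i)
    - h * ∑ i, spin (σ i)

/-- The p-spin partition function. -/
def ZP (p N : ℕ) (β h : ℝ) (J : Finset (Fin N) → ℝ) : ℝ :=
  ∑ σ : Fin N → Bool, Real.exp (-(β * hamP p N h J σ))

/-- The p-spin quenched average `N⁻¹ E log Z_N^{(p)}(β, h, J)`. -/
def quenchedFEP (p N : ℕ) (β h : ℝ) : ℝ :=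
  (N : ℝ)⁻¹ * ∫ J, Real.log (ZP p N β h J) ∂gaussP N

/-- The functional order parameter on `[0, p/2]` as a function. -/
def xFunP (p K : ℕ) (q m : ℕ → ℝ) (r : ℝ) : ℝ :=
  if (p : ℝ) / 2 ≤ r then m K else m (sInf {a : ℕ | r < q a})

/-- The change of variables `q̄(r)` defined by `2r = p q̄^{p-1}`. -/
def qBar (p : ℕ) (r : ℝ) : ℝ := (2 * r / p) ^ (((p : ℝ) - 1)⁻¹)

/-- The p-spin trial function
`ᾱ_p(β, h; x) = log 2 + f(0, h; x, β) - (β²/2) ∫₀^{p/2} q̄(r) x(r) dr`. -/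
def trialAlphaP (p K : ℕ) (q m : ℕ → ℝ) (β h : ℝ) : ℝ :=
  Real.log 2 + parisiLevel K q m β K h
    - β ^ 2 / 2 * ∫ r in (0 : ℝ)..((p : ℝ) / 2), qBar p r * xFunP p K q m r

/-!
Guerra's interpolation, run in small time steps. Start from the uniform average over spin
configurations and, in each step of length `ε`, trade a time-`ε` increment of the two-body Gaussian
field for a time-`ε` increment of the one-body fields, split over the levels of the Parisi
recursion. At exponent `1` both increments only shift the log-partition function by constants.
Passing to an outer level lowers the exponent from `m (a + 1)` to `m a`; by the second-order
expansion of exponential means, which takes the place of Gaussian integration by parts, this moves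
the comparison by `(m (a + 1) - m a) / 2` times the difference of the variances of the two fields
along the gradient of the current functional, up to `O(ε ^ (3 / 2))`. That gradient is always a
Gibbs average. With `R` the overlap of two replicas, `⟨R⟩ ^ 2 ≤ ⟨R ^ 2⟩` and
`(⟨R⟩ - q a) ^ 2 ≥ 0` give this difference its sign, at a cost quadratic in `q a`. Over `1 / ε`
steps the errors vanish, the costs add up to the integral term, and the one-body cascade factorises
over the sites into copies of the Parisi function.
-/

section ExpMean

variable {Ω Ω' : Type*} [MeasurableSpace Ω] [MeasurableSpace Ω'] {μ : Measure Ω} {ν : Measure Ω'}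
  {X Y P R : Ω → ℝ} {m c η : ℝ}

/-- The random variable `X` has exponential moments of every order. -/
def HasExpMoments (X : Ω → ℝ) (μ : Measure Ω) : Prop :=
  ∀ t : ℝ, Integrable (fun ω => Real.exp (t * X ω)) μ

/-- The exponential mean `m⁻¹ log E exp (m X)`, which is the ordinary mean for `m = 0`. The Parisi
recursion, the log-partition function and the quenched average are all instances of it. -/
def expMean (m : ℝ) (μ : Measure Ω) (X : Ω → ℝ) : ℝ :=
  if m = 0 then ∫ ω, X ω ∂μ else m⁻¹ * Real.log (∫ ω, Real.exp (m * X ω) ∂μ)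

lemma expMean_zero : expMean 0 μ X = ∫ ω, X ω ∂μ := if_pos rfl

lemma expMean_of_ne_zero (hm : m ≠ 0) :
    expMean m μ X = m⁻¹ * Real.log (∫ ω, Real.exp (m * X ω) ∂μ) := if_neg hm

namespace HasExpMoments

lemma mem_interior_integrableExpSet (hX : HasExpMoments X μ) (t : ℝ) :
    t ∈ interior (integrableExpSet X μ) := by
  have huniv : integrableExpSet X μ = Set.univ := Set.eq_univ_of_forall hX
  simp only [huniv, interior_univ, Set.mem_univ]

lemma integrable (hX : HasExpMoments X μ) : Integrable X μ :=
  integrable_of_mem_interior_integrableExpSet (hX.mem_interior_integrableExpSet 0)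

lemma integrable_pow (hX : HasExpMoments X μ) (n : ℕ) : Integrable (fun ω => X ω ^ n) μ :=
  integrable_pow_of_mem_interior_integrableExpSet (hX.mem_interior_integrableExpSet 0) n

lemma integrable_pow_mul_exp (hX : HasExpMoments X μ) (n : ℕ) :
    Integrable (fun ω => X ω ^ n * Real.exp (X ω)) μ := by
  simpa only [one_mul] using integrable_pow_mul_exp_of_mem_interior_integrableExpSet
    (hX.mem_interior_integrableExpSet 1) n

lemma of_abs_le (hR : HasExpMoments R μ) (hY : AEMeasurable Y μ) (hle : ∀ ω, |Y ω| ≤ R ω) :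
    HasExpMoments Y μ := fun t => by
  refine (hR |t|).mono' (hY.const_mul t).exp.aestronglyMeasurable (ae_of_all _ fun ω => ?_)
  rw [Real.norm_of_nonneg (Real.exp_pos _).le, Real.exp_le_exp]
  calc t * Y ω ≤ |t| * |Y ω| := (le_abs_self _).trans (abs_mul _ _).le
    _ ≤ |t| * R ω := mul_le_mul_of_nonneg_left (hle ω) (abs_nonneg t)

lemma const_mul (hX : HasExpMoments X μ) (c : ℝ) : HasExpMoments (fun ω => c * X ω) μ :=
  fun t => by simpa only [mul_assoc] using hX (t * c)

lemma const_add (hX : HasExpMoments X μ) (c : ℝ) : HasExpMoments (fun ω => c + X ω) μ :=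
  fun t => by simpa only [mul_add, Real.exp_add] using (hX t).const_mul (Real.exp (t * c))

lemma add_const (hX : HasExpMoments X μ) (c : ℝ) : HasExpMoments (fun ω => X ω + c) μ := by
  simpa only [add_comm] using hX.const_add c

lemma integral_exp_pos [NeZero μ] (hX : HasExpMoments X μ) (m : ℝ) :
    0 < ∫ ω, Real.exp (m * X ω) ∂μ :=
  _root_.MeasureTheory.integral_exp_pos (hX m)

end HasExpMoments

lemma hasExpMoments_of_abs_le [IsFiniteMeasure μ] (hP : AEMeasurable P μ)
    (hη : ∀ ω, |P ω| ≤ η) : HasExpMoments P μ :=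
  HasExpMoments.of_abs_le (R := fun _ => η) (fun _ => integrable_const _) hP hη

lemma expMean_add_const [IsProbabilityMeasure μ] (hX : HasExpMoments X μ) :
    expMean m μ (fun ω => X ω + c) = expMean m μ X + c := by
  rcases eq_or_ne m 0 with rfl | hm
  · simp only [expMean_zero, integral_add hX.integrable (integrable_const c), integral_const,
      probReal_univ, one_smul]
  · simp only [expMean_of_ne_zero hm, mul_add, Real.exp_add, integral_mul_const]
    rw [Real.log_mul (hX.integral_exp_pos m).ne' (Real.exp_pos _).ne', Real.log_exp, mul_add,
      inv_mul_cancel_left₀ hm]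

lemma expMean_mono [NeZero μ] (hm : 0 ≤ m) (hX : HasExpMoments X μ) (hY : HasExpMoments Y μ)
    (h : ∀ ω, X ω ≤ Y ω) : expMean m μ X ≤ expMean m μ Y := by
  rcases hm.eq_or_lt with rfl | hm
  · simpa only [expMean_zero] using integral_mono hX.integrable hY.integrable h
  · rw [expMean_of_ne_zero hm.ne', expMean_of_ne_zero hm.ne']
    have hexp : ∫ ω, Real.exp (m * X ω) ∂μ ≤ ∫ ω, Real.exp (m * Y ω) ∂μ :=
      integral_mono (hX m) (hY m) fun ω =>
        Real.exp_le_exp.2 (mul_le_mul_of_nonneg_left (h ω) hm.le)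
    exact mul_le_mul_of_nonneg_left (Real.log_le_log (hX.integral_exp_pos m) hexp)
      (inv_nonneg.2 hm.le)

lemma expMean_le_expMean_add [IsProbabilityMeasure μ] (hm : 0 ≤ m) (hX : HasExpMoments X μ)
    (hY : HasExpMoments Y μ) (h : ∀ ω, X ω ≤ Y ω + c) : expMean m μ X ≤ expMean m μ Y + c :=
  (expMean_mono hm hX (hY.add_const c) h).trans_eq (expMean_add_const hY)

lemma abs_expMean_sub_le [IsProbabilityMeasure μ] (hm : 0 ≤ m) (hX : HasExpMoments X μ)
    (hY : HasExpMoments Y μ) (h : ∀ ω, |X ω - Y ω| ≤ c) :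
    |expMean m μ X - expMean m μ Y| ≤ c := by
  rw [abs_sub_le_iff]
  exact ⟨sub_left_le_of_le_add (expMean_le_expMean_add hm hX hY fun ω => by
      linarith [(abs_le.1 (h ω)).2]),
    sub_left_le_of_le_add (expMean_le_expMean_add hm hY hX fun ω => by
      linarith [(abs_le.1 (h ω)).1])⟩

lemma expMean_map {f : Ω → Ω'} (hf : AEMeasurable f μ) {F : Ω' → ℝ} (hF : Measurable F) :
    expMean m (μ.map f) F = expMean m μ (fun ω => F (f ω)) := by
  unfold expMean
  rw [integral_map hf hF.aestronglyMeasurable,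
    integral_map hf (hF.const_mul m).exp.aestronglyMeasurable]

lemma expMean_expMean [IsProbabilityMeasure μ] [IsProbabilityMeasure ν] {F : Ω × Ω' → ℝ}
    (hF : HasExpMoments F (μ.prod ν)) :
    expMean m μ (fun ω => expMean m ν fun ω' => F (ω, ω')) = expMean m (μ.prod ν) F := by
  rcases eq_or_ne m 0 with rfl | hm
  · simp only [expMean_zero, integral_prod F hF.integrable]
  · have hinner : ∀ᵐ ω ∂μ, Real.exp (m * expMean m ν fun ω' => F (ω, ω'))
        = ∫ ω', Real.exp (m * F (ω, ω')) ∂ν := by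
      filter_upwards [(hF m).prod_right_ae] with ω hω
      rw [expMean_of_ne_zero hm, mul_inv_cancel_left₀ hm, Real.exp_log (integral_exp_pos hω)]
    rw [expMean_of_ne_zero hm, expMean_of_ne_zero hm, integral_congr_ae hinner,
      integral_prod _ (hF m)]

lemma expMean_comm [IsProbabilityMeasure μ] [IsProbabilityMeasure ν] {F : Ω × Ω' → ℝ}
    (hF : HasExpMoments F (μ.prod ν)) :
    expMean m μ (fun ω => expMean m ν fun ω' => F (ω, ω'))
      = expMean m ν (fun ω' => expMean m μ fun ω => F (ω, ω')) := by
  have hswap : HasExpMoments (fun p : Ω' × Ω => F p.swap) (ν.prod μ) := fun t => (hF t).swap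
  calc expMean m μ (fun ω => expMean m ν fun ω' => F (ω, ω'))
      = expMean m (μ.prod ν) F := expMean_expMean hF
    _ = expMean m (ν.prod μ) fun p => F p.swap := by
        unfold expMean
        rw [← integral_prod_swap F, ← integral_prod_swap fun p => Real.exp (m * F p)]
    _ = expMean m ν (fun ω' => expMean m μ fun ω => F (ω, ω')) := (expMean_expMean hswap).symm

lemma expMean_pi_sum {ι : Type*} [Fintype ι] {Ω : ι → Type*} [∀ i, MeasurableSpace (Ω i)]
    {μ : ∀ i, Measure (Ω i)} [∀ i, IsProbabilityMeasure (μ i)] {f : ∀ i, Ω i → ℝ}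
    (hf : ∀ i, HasExpMoments (f i) (μ i)) :
    expMean m (Measure.pi μ) (fun x => ∑ i, f i (x i)) = ∑ i, expMean m (μ i) (f i) := by
  rcases eq_or_ne m 0 with rfl | hm
  · simp only [expMean_zero]
    rw [integral_finsetSum _ fun i _ => integrable_comp_eval (hf i).integrable]
    exact Finset.sum_congr rfl fun i _ => integral_comp_eval (hf i).integrable.aestronglyMeasurable
  · simp only [expMean_of_ne_zero hm, Finset.mul_sum, Real.exp_sum]
    rw [integral_fintype_prod_eq_prod (fun i x => Real.exp (m * f i x)),
      Real.log_prod fun i _ => ((hf i).integral_exp_pos m).ne', Finset.mul_sum]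

lemma expMean_add [IsProbabilityMeasure μ] (hX : HasExpMoments X μ)
    (hXP : HasExpMoments (fun ω => X ω + P ω) μ) :
    expMean m μ (fun ω => X ω + P ω)
      = expMean m μ X + expMean m (μ.tilted fun ω => m * X ω) P := by
  rcases eq_or_ne m 0 with rfl | hm
  · have hP : Integrable P μ := by
      simpa only [Pi.sub_def, add_sub_cancel_left] using hXP.integrable.sub hX.integrable
    simp only [expMean_zero, zero_mul, tilted_const, integral_add hX.integrable hP]
  · simp only [expMean_of_ne_zero hm]
    rw [integral_exp_tilted, ← mul_add, Real.log_div _ (hX.integral_exp_pos m).ne',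
      add_sub_cancel]
    · simp only [Pi.add_apply, mul_add]
    · simpa only [Pi.add_apply, mul_add] using (hXP.integral_exp_pos m).ne'

lemma integral_le_expMean [IsProbabilityMeasure μ] (hm : 0 ≤ m) (hX : HasExpMoments X μ) :
    ∫ ω, X ω ∂μ ≤ expMean m μ X := by
  rcases hm.eq_or_lt with rfl | hm
  · exact expMean_zero.ge
  · rw [expMean_of_ne_zero hm.ne', le_inv_mul_iff₀ hm, ← integral_const_mul,
      Real.le_log_iff_exp_le (hX.integral_exp_pos m)]
    exact convexOn_exp.map_integral_le Real.continuous_exp.continuousOn isClosed_univ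
      (by simp) (hX.integrable.const_mul m) (hX m)

lemma expMean_le_integral_add [IsProbabilityMeasure μ] (hm : 0 ≤ m) (hX : AEMeasurable X μ)
    (hη : ∀ ω, |X ω| ≤ η) : expMean m μ X ≤ ∫ ω, X ω ∂μ + m * η ^ 2 / 2 := by
  rcases hm.eq_or_lt with rfl | hm
  · simp only [expMean_zero, zero_mul, zero_div, add_zero, le_refl]
  have hoeffding : cgf (fun ω => X ω - ∫ ω, X ω ∂μ) μ m ≤ η ^ 2 * m ^ 2 / 2 := by
    refine ((hasSubgaussianMGF_of_mem_Icc hX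
      (ae_of_all _ fun ω => abs_le.1 (hη ω))).cgf_le m).trans_eq ?_
    simp only [sub_neg_eq_add, NNReal.coe_pow, NNReal.coe_div, coe_nnnorm,
      NNReal.coe_ofNat, Real.norm_eq_abs, div_pow, sq_abs]
    ring
  have hcentred : expMean m μ X - ∫ ω, X ω ∂μ = m⁻¹ * cgf (fun ω => X ω - ∫ ω, X ω ∂μ) μ m := by
    rw [sub_eq_add_neg, ← expMean_add_const (hasExpMoments_of_abs_le hX hη),
      expMean_of_ne_zero hm.ne']
    rfl
  have : m⁻¹ * cgf (fun ω => X ω - ∫ ω, X ω ∂μ) μ m ≤ m⁻¹ * (η ^ 2 * m ^ 2 / 2) :=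
    mul_le_mul_of_nonneg_left hoeffding (inv_nonneg.2 hm.le)
  rw [show m⁻¹ * (η ^ 2 * m ^ 2 / 2) = m * η ^ 2 / 2 by field_simp] at this
  linarith

end ExpMean

section SecondOrder

variable {Ω : Type*} [MeasurableSpace Ω] {μ : Measure Ω}
  {Y Z Q R : Ω → ℝ} {m δ : ℝ}

lemma abs_exp_sub_quadratic_le (x : ℝ) :
    |Real.exp x - (1 + x + x ^ 2 / 2)| ≤ |x| ^ 3 * Real.exp |x| := by
  have h := Complex.norm_exp_sub_sum_le_norm_mul_exp (x : ℂ) 3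
  have hsum : Complex.exp x - ∑ k ∈ Finset.range 3, (x : ℂ) ^ k / (k.factorial : ℂ)
      = ((Real.exp x - (1 + x + x ^ 2 / 2) : ℝ) : ℂ) := by
    push_cast [Finset.sum_range_succ, Nat.factorial]
    simp
  rwa [hsum, Complex.norm_real, Complex.norm_real] at h

lemma abs_inv_mul_log_sub_le {I V A B : ℝ} (hm0 : 0 < m) (hm1 : m ≤ 1) (hδ0 : 0 ≤ δ) (hδ1 : δ ≤ 1)
    (hA : 0 ≤ A) (hI : 1 ≤ I) (hV0 : 0 ≤ V) (hV : V ≤ δ ^ 2 * B)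
    (hIV : |I - (1 + m ^ 2 / 2 * V)| ≤ m * δ ^ 3 * A) :
    |m⁻¹ * Real.log I - m / 2 * V| ≤ (A + (A + B) ^ 2) * δ ^ 3 := by
  have hδ32 : δ ^ 3 ≤ δ ^ 2 := pow_le_pow_of_le_one hδ0 hδ1 (by norm_num)
  have hIle : I - 1 ≤ m * (δ ^ 2 * (A + B)) := by
    have : m * (m / 2 * V) ≤ m * (δ ^ 2 * B) :=
      mul_le_mul_of_nonneg_left (by nlinarith [hV0.trans hV]) hm0.le
    have : m * (δ ^ 3 * A) ≤ m * (δ ^ 2 * A) := by gcongr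
    nlinarith [(abs_le.1 hIV).2]
  have hsq : (I - 1) ^ 2 ≤ m * (δ ^ 3 * (A + B) ^ 2) := by
    calc (I - 1) ^ 2 ≤ (m * (δ ^ 2 * (A + B))) ^ 2 := pow_le_pow_left₀ (by linarith) hIle 2
      _ = m ^ 2 * (δ ^ 4 * (A + B) ^ 2) := by ring
      _ ≤ m * (δ ^ 3 * (A + B) ^ 2) := by
        have hm2 : m ^ 2 ≤ m := pow_le_of_le_one hm0.le hm1 two_ne_zero
        have hδ43 : δ ^ 4 ≤ δ ^ 3 := pow_le_pow_of_le_one hδ0 hδ1 (by norm_num)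
        exact mul_le_mul hm2 (mul_le_mul_of_nonneg_right hδ43 (sq_nonneg _)) (by positivity) hm0.le
  have hlog_le : Real.log I ≤ I - 1 := Real.log_le_sub_one_of_pos (by linarith)
  have hle_log : I - 1 - (I - 1) ^ 2 ≤ Real.log I := by
    have hinv : I - 1 - (I - 1) ^ 2 ≤ 1 - I⁻¹ := by
      rw [← sub_nonneg, show 1 - I⁻¹ - (I - 1 - (I - 1) ^ 2) = (I - 1) ^ 3 / I + 0 by
        field_simp; ring]
      have : 0 ≤ I - 1 := by linarith
      positivity
    exact hinv.trans (Real.one_sub_inv_le_log_of_pos (by linarith))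
  have hdiv : m⁻¹ * Real.log I - m / 2 * V = (Real.log I - m ^ 2 / 2 * V) / m := by field_simp
  rw [hdiv, abs_div, abs_of_pos hm0, div_le_iff₀ hm0, abs_le]
  have := abs_le.1 hIV
  have : 0 ≤ m * (δ ^ 3 * (A + B) ^ 2) := by positivity
  constructor <;> nlinarith

lemma abs_sub_integral_le {A B : Ω → ℝ} {c : ℝ} (hB : Integrable B μ)
    (hAB : ∀ ω, |A ω| ≤ c * B ω) (ω : Ω) :
    |A ω - ∫ ω', A ω' ∂μ| ≤ c * (B ω + ∫ ω', B ω' ∂μ) := by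
  have hmean : |∫ ω', A ω' ∂μ| ≤ c * ∫ ω', B ω' ∂μ := by
    rw [← integral_const_mul]
    exact norm_integral_le_of_norm_le (f := A) (hB.const_mul c) (ae_of_all _ hAB)
  rw [mul_add]
  exact (abs_sub _ _).trans (add_le_add (hAB ω) hmean)

variable [IsProbabilityMeasure μ]

lemma abs_integral_exp_sub_quadratic_le (hR : HasExpMoments R μ) (hR0 : ∀ ω, 0 ≤ R ω)
    (hm0 : 0 ≤ m) (hm1 : m ≤ 1) (hδ0 : 0 ≤ δ) (hδ1 : δ ≤ 1) (hY : AEMeasurable Y μ)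
    (hYR : ∀ ω, |Y ω| ≤ δ * R ω) (hcentred : ∫ ω, Y ω ∂μ = 0) :
    |∫ ω, Real.exp (m * Y ω) ∂μ - (1 + m ^ 2 / 2 * ∫ ω, Y ω ^ 2 ∂μ)|
      ≤ m * δ ^ 3 * ∫ ω, R ω ^ 3 * Real.exp (R ω) ∂μ := by
  have hYexp : HasExpMoments Y μ := (hR.const_mul δ).of_abs_le hY hYR
  have hlin : Integrable (fun ω => 1 + m * Y ω) μ := ((hYexp.const_mul m).const_add 1).integrable
  have hsq : Integrable (fun ω => m ^ 2 / 2 * Y ω ^ 2) μ := (hYexp.integrable_pow 2).const_mul _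
  have hint : ∫ ω, (1 + m * Y ω + m ^ 2 / 2 * Y ω ^ 2) ∂μ = 1 + m ^ 2 / 2 * ∫ ω, Y ω ^ 2 ∂μ := by
    rw [integral_add hlin hsq, integral_add (integrable_const 1) (hYexp.const_mul m).integrable,
      integral_const_mul, integral_const_mul, hcentred]
    simp only [integral_const, probReal_univ, smul_eq_mul, mul_one, mul_zero, add_zero]
  have hquad : Integrable (fun ω => 1 + m * Y ω + m ^ 2 / 2 * Y ω ^ 2) μ := hlin.add hsq
  rw [← hint, ← integral_sub (hYexp m) hquad, ← integral_const_mul, ← Real.norm_eq_abs]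
  refine norm_integral_le_of_norm_le ((hR.integrable_pow_mul_exp 3).const_mul _)
    (ae_of_all _ fun ω => ?_)
  have hmY : |m * Y ω| ≤ m * δ * R ω := by
    rw [abs_mul, abs_of_nonneg hm0, mul_assoc]
    exact mul_le_mul_of_nonneg_left (hYR ω) hm0
  have hmδ : m * δ * R ω ≤ R ω := mul_le_of_le_one_left (hR0 ω) (mul_le_one₀ hm1 hδ0 hδ1)
  calc ‖Real.exp (m * Y ω) - (1 + m * Y ω + m ^ 2 / 2 * Y ω ^ 2)‖
      ≤ |m * Y ω| ^ 3 * Real.exp |m * Y ω| := by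
        rw [show m ^ 2 / 2 * Y ω ^ 2 = (m * Y ω) ^ 2 / 2 by ring]
        exact abs_exp_sub_quadratic_le _
    _ ≤ (m * δ * R ω) ^ 3 * Real.exp (R ω) := by
        have : 0 ≤ m * δ * R ω := (abs_nonneg _).trans hmY
        gcongr
        exact hmY.trans hmδ
    _ = m ^ 3 * (δ ^ 3 * (R ω ^ 3 * Real.exp (R ω))) := by ring
    _ ≤ m * (δ ^ 3 * (R ω ^ 3 * Real.exp (R ω))) := by
        have := hR0 ω
        gcongr
        exact pow_le_of_le_one hm0 hm1 three_ne_zero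
    _ = m * δ ^ 3 * (R ω ^ 3 * Real.exp (R ω)) := by ring

lemma abs_expMean_sub_secondMoment_le (hR : HasExpMoments R μ) (hR0 : ∀ ω, 0 ≤ R ω) (hm0 : 0 ≤ m)
    (hm1 : m ≤ 1) (hδ0 : 0 ≤ δ) (hδ1 : δ ≤ 1) (hY : AEMeasurable Y μ)
    (hYR : ∀ ω, |Y ω| ≤ δ * R ω) (hcentred : ∫ ω, Y ω ∂μ = 0) :
    |expMean m μ Y - m / 2 * ∫ ω, Y ω ^ 2 ∂μ|
      ≤ ((∫ ω, R ω ^ 3 * Real.exp (R ω) ∂μ)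
        + (∫ ω, R ω ^ 3 * Real.exp (R ω) ∂μ + ∫ ω, R ω ^ 2 ∂μ) ^ 2) * δ ^ 3 := by
  have hYexp : HasExpMoments Y μ := (hR.const_mul δ).of_abs_le hY hYR
  have hA : 0 ≤ ∫ ω, R ω ^ 3 * Real.exp (R ω) ∂μ :=
    integral_nonneg fun ω => mul_nonneg (pow_nonneg (hR0 ω) 3) (Real.exp_pos _).le
  rcases hm0.eq_or_lt with rfl | hm
  · rw [expMean_zero, hcentred]
    simp only [zero_div, zero_mul, sub_zero, abs_zero]
    positivity
  rw [expMean_of_ne_zero hm.ne']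
  refine abs_inv_mul_log_sub_le hm hm1 hδ0 hδ1 hA ?_ (integral_nonneg fun ω => sq_nonneg _) ?_
    (abs_integral_exp_sub_quadratic_le hR hR0 hm0 hm1 hδ0 hδ1 hY hYR hcentred)
  · have hjensen : 0 ≤ expMean m μ Y := hcentred.symm.trans_le (integral_le_expMean hm0 hYexp)
    rw [expMean_of_ne_zero hm.ne'] at hjensen
    exact (Real.log_nonneg_iff (hYexp.integral_exp_pos m)).1
      (nonneg_of_mul_nonneg_right hjensen (inv_pos.2 hm))
  · rw [← integral_const_mul]
    refine integral_mono (hYexp.integrable_pow 2) ((hR.integrable_pow 2).const_mul _) fun ω => ?_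
    rw [← mul_pow]
    exact sq_le_sq' (abs_le.1 (hYR ω)).1 (abs_le.1 (hYR ω)).2

lemma exists_abs_expMean_sub_le (hR : HasExpMoments R μ) (hR0 : ∀ ω, 0 ≤ R ω) :
    ∃ C, 0 ≤ C ∧ ∀ (m δ : ℝ) (Y : Ω → ℝ), 0 ≤ m → m ≤ 1 → 0 ≤ δ → δ ≤ 1 → AEMeasurable Y μ →
      (∀ ω, |Y ω| ≤ δ * R ω) →
      |expMean m μ Y - (∫ ω, Y ω ∂μ + m / 2 * Var[Y; μ])| ≤ C * δ ^ 3 := by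
  set R' : Ω → ℝ := fun ω => R ω + ∫ ω', R ω' ∂μ
  have hR' : HasExpMoments R' μ := hR.add_const _
  have hR'0 : ∀ ω, 0 ≤ R' ω := fun ω => add_nonneg (hR0 ω) (integral_nonneg hR0)
  refine ⟨(∫ ω, R' ω ^ 3 * Real.exp (R' ω) ∂μ)
    + (∫ ω, R' ω ^ 3 * Real.exp (R' ω) ∂μ + ∫ ω, R' ω ^ 2 ∂μ) ^ 2, ?_, ?_⟩
  · have : 0 ≤ ∫ ω, R' ω ^ 3 * Real.exp (R' ω) ∂μ :=
      integral_nonneg fun ω => mul_nonneg (pow_nonneg (hR'0 ω) 3) (Real.exp_pos _).le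
    positivity
  · intro m δ Y hm0 hm1 hδ0 hδ1 hY hYR
    have hYexp : HasExpMoments Y μ := (hR.const_mul δ).of_abs_le hY hYR
    have hcentred : ∫ ω, (Y ω - ∫ ω', Y ω' ∂μ) ∂μ = 0 := by
      rw [integral_sub hYexp.integrable (integrable_const _), integral_const, probReal_univ,
        one_smul, sub_self]
    have hshift : expMean m μ (fun ω => Y ω - ∫ ω', Y ω' ∂μ) = expMean m μ Y - ∫ ω, Y ω ∂μ :=
      expMean_add_const hYexp
    rw [variance_eq_integral hY, ← sub_sub, ← hshift]
    exact abs_expMean_sub_secondMoment_le hR' hR'0 hm0 hm1 hδ0 hδ1 (hY.sub_const _)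
      (abs_sub_integral_le hR.integrable hYR) hcentred

lemma abs_variance_sub_variance_le (hR : MemLp R 2 μ) (hQ : MemLp Q 2 μ)
    (hY : AEStronglyMeasurable Y μ) (hZ : AEStronglyMeasurable Z μ)
    (hYR : ∀ ω, |Y ω| ≤ δ * R ω) (hZR : ∀ ω, |Z ω| ≤ δ * R ω)
    (hYZ : ∀ ω, |Y ω - Z ω| ≤ δ ^ 2 * Q ω) :
    |Var[Y; μ] - Var[Z; μ]|
      ≤ 2 * (∫ ω, (Q ω + ∫ ω', Q ω' ∂μ) * (R ω + ∫ ω', R ω' ∂μ) ∂μ) * δ ^ 3 := by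
  have hY2 : MemLp Y 2 μ := (hR.const_mul δ).mono' hY (ae_of_all _ hYR)
  have hZ2 : MemLp Z 2 μ := (hR.const_mul δ).mono' hZ (ae_of_all _ hZR)
  have hcov : Var[Y; μ] - Var[Z; μ] = cov[Y - Z, Y + Z; μ] := by
    rw [covariance_sub_left hY2 hZ2 (hY2.add hZ2), covariance_add_right hY2 hY2 hZ2,
      covariance_add_right hZ2 hY2 hZ2, covariance_self hY2.aemeasurable,
      covariance_self hZ2.aemeasurable, covariance_comm Z Y]
    ring
  have hsum : ∀ ω, |Y ω + Z ω| ≤ 2 * δ * R ω := fun ω => by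
    linarith [abs_add_le (Y ω) (Z ω), hYR ω, hZR ω]
  have hbound : ∀ ω, ‖((Y - Z) ω - ∫ ω', (Y - Z) ω' ∂μ) * ((Y + Z) ω - ∫ ω', (Y + Z) ω' ∂μ)‖
      ≤ 2 * δ ^ 3 * ((Q ω + ∫ ω', Q ω' ∂μ) * (R ω + ∫ ω', R ω' ∂μ)) := fun ω => by
    have hdiff := abs_sub_integral_le (hQ.integrable one_le_two) hYZ ω
    calc _ ≤ δ ^ 2 * (Q ω + ∫ ω', Q ω' ∂μ) * (2 * δ * (R ω + ∫ ω', R ω' ∂μ)) := by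
          rw [norm_mul]
          exact mul_le_mul hdiff (abs_sub_integral_le (hR.integrable one_le_two) hsum ω)
            (norm_nonneg _) ((abs_nonneg _).trans hdiff)
      _ = _ := by ring
  rw [hcov, mul_right_comm, ← integral_const_mul]
  exact norm_integral_le_of_norm_le
    (((hQ.add (memLp_const _)).integrable_mul (hR.add (memLp_const _))).const_mul _)
    (ae_of_all _ hbound)

end SecondOrder

section GaussAvg

variable {E F : Type*} [NormedAddCommGroup E] [NormedSpace ℝ E]
  [NormedAddCommGroup F] [NormedSpace ℝ F] [MeasurableSpace F] [BorelSpace F]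
  [SecondCountableTopology F] [CompleteSpace F] {u v : E → ℝ} {K : NNReal} {m c s t : ℝ}

lemma hasExpMoments_norm (γ : Measure F) [IsGaussian γ] : HasExpMoments (fun x => ‖x‖) γ := by
  intro t
  obtain ⟨C, hC, hint⟩ := IsGaussian.exists_integrable_exp_sq γ
  refine (hint.const_mul (Real.exp (t ^ 2 / (4 * C)))).mono' (by fun_prop) (ae_of_all _ fun x => ?_)
  rw [Real.norm_of_nonneg (Real.exp_pos _).le, ← Real.exp_add, Real.exp_le_exp, ← sub_nonneg,
    show t ^ 2 / (4 * C) + C * ‖x‖ ^ 2 - t * ‖x‖ = (2 * C * ‖x‖ - t) ^ 2 / (4 * C) by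
      field_simp; ring]
  positivity

lemma hasExpMoments_of_lipschitzWith {f : F → ℝ} (hf : LipschitzWith K f) (γ : Measure F)
    [IsGaussian γ] : HasExpMoments f γ := by
  refine (((hasExpMoments_norm γ).const_mul K).const_add |f 0|).of_abs_le
    hf.continuous.measurable.aemeasurable fun x => ?_
  have hdist := hf.dist_le_mul x 0
  rw [Real.dist_eq, dist_zero_right] at hdist
  linarith [abs_sub_abs_le_abs_sub (f x) (f 0)]

lemma hasExpMoments_affine (hu : LipschitzWith K u) (γ : Measure F) [IsGaussian γ] (A : F →L[ℝ] E)
    (y : E) : HasExpMoments (fun x => u (y + A x)) γ :=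
  hasExpMoments_of_lipschitzWith (hu.comp ((LipschitzWith.const y).add A.lipschitz)) γ

variable [MeasurableSpace E] {μ ν : Measure E}

/-- The exponential mean of `u` over the time-`s` Gaussian displacement `√s • x`, `x ∼ μ`. For a
fixed `m` and centred `μ` these operators form a semigroup in `s`; for `m ≠ 0` it is the Hopf–Cole
transform of the heat semigroup of `μ`. -/
def gaussAvg (m : ℝ) (μ : Measure E) (s : ℝ) (u : E → ℝ) (y : E) : ℝ :=
  expMean m μ fun x => u (y + √s • x)

lemma gaussAvg_time_zero [IsProbabilityMeasure μ] (y : E) : gaussAvg m μ 0 u y = u y := by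
  simp only [gaussAvg, Real.sqrt_zero, zero_smul, add_zero, expMean]
  split_ifs with hm
  · simp only [integral_const, probReal_univ, one_smul]
  · simp only [integral_const, probReal_univ, one_smul, Real.log_exp, inv_mul_cancel_left₀ hm]

variable [BorelSpace E] [SecondCountableTopology E] [CompleteSpace E] [IsGaussian μ] [IsGaussian ν]

lemma hasExpMoments_shift (hu : LipschitzWith K u) (s : ℝ) (y : E) :
    HasExpMoments (fun x => u (y + √s • x)) μ :=
  hasExpMoments_affine hu μ (√s • ContinuousLinearMap.id ℝ E) y

lemma hasExpMoments_two_shifts (hu : LipschitzWith K u) (s t : ℝ) (y : E) :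
    HasExpMoments (fun p : E × E => u (y + √s • p.1 + √t • p.2)) (μ.prod ν) := by
  simp only [add_assoc]
  exact hasExpMoments_affine hu (μ.prod ν)
    (√s • ContinuousLinearMap.fst ℝ E E + √t • ContinuousLinearMap.snd ℝ E E) y

lemma gaussAvg_le_add (hm : 0 ≤ m) (hu : LipschitzWith K u) (hv : LipschitzWith K v)
    (h : ∀ y, u y ≤ v y + c) (y : E) : gaussAvg m μ s u y ≤ gaussAvg m μ s v y + c :=
  expMean_le_expMean_add hm (hasExpMoments_shift hu s y) (hasExpMoments_shift hv s y) fun _ => h _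

lemma abs_gaussAvg_sub_le (hm : 0 ≤ m) (hu : LipschitzWith K u) (hv : LipschitzWith K v)
    (h : ∀ y, |u y - v y| ≤ c) (y : E) : |gaussAvg m μ s u y - gaussAvg m μ s v y| ≤ c :=
  abs_expMean_sub_le hm (hasExpMoments_shift hu s y) (hasExpMoments_shift hv s y) fun _ => h _

lemma lipschitzWith_gaussAvg (hm : 0 ≤ m) (hu : LipschitzWith K u) :
    LipschitzWith K (gaussAvg m μ s u) := by
  refine LipschitzWith.of_dist_le_mul fun y z => ?_
  refine abs_expMean_sub_le hm (hasExpMoments_shift hu s y) (hasExpMoments_shift hu s z) fun x => ?_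
  simpa only [Real.dist_eq, dist_add_right] using hu.dist_le_mul (y + √s • x) (z + √s • x)

lemma gaussAvg_comm (hu : LipschitzWith K u) (s t : ℝ) :
    gaussAvg m μ s (gaussAvg m ν t u) = gaussAvg m ν t (gaussAvg m μ s u) := by
  funext y
  simpa only [gaussAvg, add_right_comm y] using
    expMean_comm (m := m) (hasExpMoments_two_shifts (μ := μ) (ν := ν) hu s t y)

lemma exists_rotation_of_sqrt (hs : 0 ≤ s) (ht : 0 ≤ t) :
    ∃ θ : ℝ, √s = √(s + t) * Real.cos θ ∧ √t = √(s + t) * Real.sin θ := by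
  set z : ℂ := ⟨√s, √t⟩
  have hz : ‖z‖ = √(s + t) := by
    rw [Complex.norm_def, Complex.normSq_mk, Real.mul_self_sqrt hs, Real.mul_self_sqrt ht]
  exact ⟨z.arg, by rw [← hz, Complex.norm_mul_cos_arg], by rw [← hz, Complex.norm_mul_sin_arg]⟩

lemma gaussAvg_gaussAvg (hμ : μ[id] = 0) (hu : LipschitzWith K u) (hs : 0 ≤ s) (ht : 0 ≤ t) :
    gaussAvg m μ s (gaussAvg m μ t u) = gaussAvg m μ (s + t) u := by
  funext y
  obtain ⟨θ, hcos, hsin⟩ := exists_rotation_of_sqrt hs ht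
  have hG : Measurable fun x => u (y + √(s + t) • x) := by
    have := hu.continuous
    fun_prop
  calc gaussAvg m μ s (gaussAvg m μ t u) y
      = expMean m (μ.prod μ) (fun p => u (y + √s • p.1 + √t • p.2)) :=
        expMean_expMean (hasExpMoments_two_shifts hu s t y)
    _ = expMean m (μ.prod μ)
          (fun p => u (y + √(s + t) • (ContinuousLinearMap.rotation θ p).1)) := by
        simp only [ContinuousLinearMap.rotation_apply, smul_add, smul_smul, ← hcos, ← hsin,
          add_assoc]
    _ = expMean m ((μ.prod μ).map (ContinuousLinearMap.rotation θ))
          (fun p => u (y + √(s + t) • p.1)) :=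
        (expMean_map (by fun_prop) (hG.comp measurable_fst)).symm
    _ = expMean m ((μ.prod μ).map Prod.fst) (fun x => u (y + √(s + t) • x)) := by
        rw [IsGaussian.map_rotation_eq_self hμ, expMean_map (by fun_prop) hG]
    _ = gaussAvg m μ (s + t) u y := by
        rw [Measure.map_fst_prod, measure_univ, one_smul, gaussAvg]

end GaussAvg

section Gradient

/-- The first variation of an exponential mean is an average for the tilted measure. -/
lemma abs_expMean_sub_sub_integral_tilted_le {Ω : Type*} [MeasurableSpace Ω] {μ : Measure Ω}
    [IsProbabilityMeasure μ] {X Z : Ω → ℝ} {m η : ℝ} (hm0 : 0 ≤ m) (hm1 : m ≤ 1)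
    (hX : HasExpMoments X μ) (hZ : HasExpMoments Z μ) (hXZ : ∀ ω, |Z ω - X ω| ≤ η) :
    |expMean m μ Z - expMean m μ X - ∫ ω, (Z ω - X ω) ∂μ.tilted fun ω => m * X ω| ≤ η ^ 2 / 2 := by
  set τ : Measure Ω := μ.tilted fun ω => m * X ω
  have : IsProbabilityMeasure τ := isProbabilityMeasure_tilted (hX m)
  have hP : AEMeasurable (fun ω => Z ω - X ω) τ :=
    (hZ.integrable.sub hX.integrable).aemeasurable.mono_ac (tilted_absolutelyContinuous _ _)
  have hincrement : expMean m μ Z = expMean m μ X + expMean m τ fun ω => Z ω - X ω := by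
    simpa only [add_sub_cancel] using expMean_add (m := m) (P := fun ω => Z ω - X ω) hX
      (by simpa only [add_sub_cancel] using hZ)
  have hlower := integral_le_expMean hm0 (hasExpMoments_of_abs_le hP hXZ)
  have hupper := expMean_le_integral_add hm0 hP hXZ
  have hη : m * η ^ 2 ≤ η ^ 2 := mul_le_of_le_one_left (sq_nonneg η) hm1
  rw [hincrement, abs_le]
  constructor <;> nlinarith [sq_nonneg η]

variable {E : Type*} [NormedAddCommGroup E] [NormedSpace ℝ E] {S : Set (StrongDual ℝ E)}
  {K : NNReal} {L m s : ℝ} {u : E → ℝ}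

/-- `u` is differentiable with gradient in `S` at every point, with a uniform quadratic error in the
first-order expansion. The set `S` will consist of expectations with respect to Gibbs states. -/
def HasGradientIn (S : Set (StrongDual ℝ E)) (L : ℝ) (u : E → ℝ) : Prop :=
  ∀ y, ∃ p ∈ S, ∀ x, |u (y + x) - u y - p x| ≤ L * ‖x‖ ^ 2

lemma hasFDerivAt_of_abs_sub_le {p : StrongDual ℝ E} {y : E}
    (h : ∀ x, |u (y + x) - u y - p x| ≤ L * ‖x‖ ^ 2) : HasFDerivAt u p y := by
  rw [hasFDerivAt_iff_isLittleO_nhds_zero]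
  refine (Asymptotics.IsBigO.of_bound L (.of_forall fun x => ?_)).trans_isLittleO
    (Asymptotics.isLittleO_norm_pow_id one_lt_two)
  rw [norm_pow, norm_norm]
  exact h x

lemma hasGradientIn_of_mem {p : StrongDual ℝ E} (hp : p ∈ S) : HasGradientIn S 0 p :=
  fun y => ⟨p, hp, fun x => by simp only [map_add, add_sub_cancel_left, sub_self, abs_zero,
    zero_mul, le_refl]⟩

namespace HasGradientIn

lemma mono {L' : ℝ} (hu : HasGradientIn S L u) (hL : L ≤ L') : HasGradientIn S L' u := fun y =>
  let ⟨p, hpS, hp⟩ := hu y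
  ⟨p, hpS, fun x => (hp x).trans (mul_le_mul_of_nonneg_right hL (sq_nonneg _))⟩

lemma comp_add_right (hu : HasGradientIn S L u) (z : E) : HasGradientIn S L fun y => u (y + z) :=
  fun y => by simpa only [add_right_comm y] using hu (y + z)

lemma differentiable (hu : HasGradientIn S L u) : Differentiable ℝ u := fun y =>
  let ⟨_, _, hp⟩ := hu y
  (hasFDerivAt_of_abs_sub_le hp).differentiableAt

lemma fderiv_mem (hu : HasGradientIn S L u) (y : E) : fderiv ℝ u y ∈ S := by
  obtain ⟨p, hpS, hp⟩ := hu y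
  rwa [(hasFDerivAt_of_abs_sub_le hp).fderiv]

lemma abs_sub_fderiv_le (hu : HasGradientIn S L u) (y x : E) :
    |u (y + x) - u y - fderiv ℝ u y x| ≤ L * ‖x‖ ^ 2 := by
  obtain ⟨p, -, hp⟩ := hu y
  rw [(hasFDerivAt_of_abs_sub_le hp).fderiv]
  exact hp x

lemma lipschitzWith (hu : HasGradientIn S L u) (hS : ∀ p ∈ S, ‖p‖₊ ≤ K) : LipschitzWith K u :=
  lipschitzWith_of_nnnorm_fderiv_le hu.differentiable fun y => hS _ (hu.fderiv_mem y)

end HasGradientIn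

lemma hasGradientIn_expMean {Ω : Type*} [MeasurableSpace Ω] {μ : Measure Ω}
    [IsProbabilityMeasure μ] {U : Ω → E → ℝ} (hconv : Convex ℝ S) (hclosed : IsClosed S)
    (hS : ∀ p ∈ S, ‖p‖₊ ≤ K) (hm0 : 0 ≤ m) (hm1 : m ≤ 1) (hU : ∀ ω, HasGradientIn S L (U ω))
    (hUmeas : ∀ y, AEStronglyMeasurable (fun ω => fderiv ℝ (U ω) y) μ)
    (hUexp : ∀ y, HasExpMoments (fun ω => U ω y) μ) :
    HasGradientIn S (L + K ^ 2 / 2) fun y => expMean m μ fun ω => U ω y := by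
  intro y
  set τ : Measure Ω := μ.tilted fun ω => m * U ω y
  have : IsProbabilityMeasure τ := isProbabilityMeasure_tilted (hUexp y m)
  have hac : τ ≪ μ := tilted_absolutelyContinuous _ _
  have hgrad : Integrable (fun ω => fderiv ℝ (U ω) y) τ :=
    Integrable.of_bound ((hUmeas y).mono_ac hac) K
      (ae_of_all _ fun ω => hS _ ((hU ω).fderiv_mem y))
  refine ⟨∫ ω, fderiv ℝ (U ω) y ∂τ,
    hconv.integral_mem hclosed (ae_of_all _ fun ω => (hU ω).fderiv_mem y) hgrad, fun x => ?_⟩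
  have hbound : ∀ ω, |U ω (y + x) - U ω y| ≤ K * ‖x‖ := fun ω => by
    simpa only [dist_eq_norm, Real.norm_eq_abs, add_sub_cancel_left] using
      ((hU ω).lipschitzWith hS).dist_le_mul (y + x) y
  have hint : Integrable (fun ω => U ω (y + x) - U ω y) τ :=
    Integrable.of_bound (((hUexp (y + x)).integrable.sub
      (hUexp y).integrable).aestronglyMeasurable.mono_ac hac) (K * ‖x‖) (ae_of_all _ hbound)
  have hfirst : |∫ ω, (U ω (y + x) - U ω y) ∂τ - (∫ ω, fderiv ℝ (U ω) y ∂τ) x| ≤ L * ‖x‖ ^ 2 := by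
    rw [ContinuousLinearMap.integral_apply hgrad, ← integral_sub hint
      (hgrad.apply_continuousLinearMap x)]
    simpa only [probReal_univ, mul_one, Real.norm_eq_abs] using
      norm_integral_le_of_norm_le_const (μ := τ)
        (f := fun ω => U ω (y + x) - U ω y - fderiv ℝ (U ω) y x)
        (ae_of_all _ fun ω => (hU ω).abs_sub_fderiv_le y x)
  have hsecond :=
    abs_expMean_sub_sub_integral_tilted_le hm0 hm1 (hUexp y) (hUexp (y + x)) hbound
  calc _ ≤ (K * ‖x‖) ^ 2 / 2 + L * ‖x‖ ^ 2 :=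
        (abs_sub_le _ _ _).trans (add_le_add hsecond hfirst)
    _ = (L + K ^ 2 / 2) * ‖x‖ ^ 2 := by ring

lemma hasGradientIn_gaussAvg [FiniteDimensional ℝ E] [MeasurableSpace E] [BorelSpace E]
    {μ : Measure E} [IsGaussian μ] (hconv : Convex ℝ S) (hclosed : IsClosed S)
    (hS : ∀ p ∈ S, ‖p‖₊ ≤ K) (hm0 : 0 ≤ m) (hm1 : m ≤ 1) (hu : HasGradientIn S L u) :
    HasGradientIn S (L + K ^ 2 / 2) (gaussAvg m μ s u) :=
  hasGradientIn_expMean hconv hclosed hS hm0 hm1 (fun _ => hu.comp_add_right _)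
    (fun y => by
      simp only [fderiv_comp_add_right]
      exact ((measurable_fderiv ℝ u).comp (by fun_prop)).aestronglyMeasurable)
    (hasExpMoments_shift (hu.lipschitzWith hS) s)

end Gradient

section Expansion

variable {E : Type*} [NormedAddCommGroup E] [NormedSpace ℝ E] {S : Set (StrongDual ℝ E)}
  {K : NNReal} {b L δ : ℝ} {u v : E → ℝ}

lemma sqrt_sq_mul_le (hb : b ≤ 1) (hδ : 0 ≤ δ) : √(δ ^ 2 * b) ≤ δ :=
  Real.sqrt_le_iff.2 ⟨hδ, mul_le_of_le_one_right (sq_nonneg δ) hb⟩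

lemma abs_sub_le_of_lipschitzWith (hv : LipschitzWith K v) (hb : b ≤ 1) (hδ : 0 ≤ δ) (y x : E) :
    |v (y + √(δ ^ 2 * b) • x) - v y| ≤ δ * (K * ‖x‖) := by
  have hdist := hv.dist_le_mul (y + √(δ ^ 2 * b) • x) y
  rw [Real.dist_eq, dist_eq_norm, add_sub_cancel_left, norm_smul,
    Real.norm_of_nonneg (Real.sqrt_nonneg _)] at hdist
  calc _ ≤ K * (√(δ ^ 2 * b) * ‖x‖) := hdist
    _ ≤ K * (δ * ‖x‖) := by gcongr; exact sqrt_sq_mul_le hb hδ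
    _ = δ * (K * ‖x‖) := by ring

lemma HasGradientIn.abs_sub_fderiv_sqrt_smul_le (hu : HasGradientIn S L u) (hL : 0 ≤ L)
    (hb0 : 0 ≤ b) (hb1 : b ≤ 1) (y x : E) :
    |u (y + √(δ ^ 2 * b) • x) - u y - √(δ ^ 2 * b) * fderiv ℝ u y x| ≤ δ ^ 2 * (L * ‖x‖ ^ 2) := by
  have h := hu.abs_sub_fderiv_le y (√(δ ^ 2 * b) • x)
  rw [map_smul, smul_eq_mul, norm_smul, mul_pow, Real.norm_of_nonneg (Real.sqrt_nonneg _),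
    Real.sq_sqrt (by positivity)] at h
  calc _ ≤ L * (δ ^ 2 * b * ‖x‖ ^ 2) := h
    _ ≤ L * (δ ^ 2 * 1 * ‖x‖ ^ 2) := by gcongr
    _ = δ ^ 2 * (L * ‖x‖ ^ 2) := by ring

variable [MeasurableSpace E] [BorelSpace E]

lemma variance_dual_le (μ : Measure E) [IsGaussian μ] [SecondCountableTopology E]
    [CompleteSpace E] {p : StrongDual ℝ E} (hp : ‖p‖₊ ≤ K) :
    Var[p; μ] ≤ K ^ 2 * ∫ x, ‖x‖ ^ 2 ∂μ := by
  rw [← integral_const_mul]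
  refine (variance_le_expectation_sq (by fun_prop)).trans (integral_mono_of_nonneg
    (ae_of_all _ fun x => sq_nonneg _) (((hasExpMoments_norm μ).integrable_pow 2).const_mul _)
    (ae_of_all _ fun x => ?_))
  beta_reduce
  rw [Pi.pow_apply, ← sq_abs, ← mul_pow]
  exact pow_le_pow_left₀ (abs_nonneg _) (p.le_of_opNorm_le hp x) 2

variable [SecondCountableTopology E] [CompleteSpace E]

lemma abs_gaussAvg_zero_sub_le {μ : Measure E} [IsGaussian μ] (hμ : μ[id] = 0)
    (hS : ∀ p ∈ S, ‖p‖₊ ≤ K) (hu : HasGradientIn S L u) (hL : 0 ≤ L) (hb0 : 0 ≤ b) (hb1 : b ≤ 1)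
    (y : E) : |gaussAvg 0 μ (δ ^ 2 * b) u y - u y| ≤ L * (∫ x, ‖x‖ ^ 2 ∂μ) * δ ^ 2 := by
  set p := fderiv ℝ u y
  have hcentred : ∫ x, p x ∂μ = 0 := by
    rw [IsGaussian.integral_dual, show ∫ x, x ∂μ = 0 from hμ, map_zero]
  have hint : Integrable (fun x => u (y + √(δ ^ 2 * b) • x)) μ :=
    (hasExpMoments_shift (hu.lipschitzWith hS) _ y).integrable
  have hp : Integrable p μ := (IsGaussian.memLp_dual μ p 1 (by norm_num)).integrable le_rfl
  have hremainder : gaussAvg 0 μ (δ ^ 2 * b) u y - u y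
      = ∫ x, (u (y + √(δ ^ 2 * b) • x) - u y - √(δ ^ 2 * b) * p x) ∂μ := by
    rw [integral_sub (f := fun x => u (y + √(δ ^ 2 * b) • x) - u y)
      (hint.sub (integrable_const _)) (hp.const_mul _), integral_sub hint (integrable_const _),
      integral_const_mul, hcentred, integral_const, probReal_univ, one_smul, mul_zero, sub_zero,
      gaussAvg, expMean_zero]
  rw [hremainder, mul_comm _ (δ ^ 2), ← integral_const_mul, ← integral_const_mul]
  exact norm_integral_le_of_norm_le
    (f := fun x => u (y + √(δ ^ 2 * b) • x) - u y - √(δ ^ 2 * b) * p x)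
    ((((hasExpMoments_norm μ).integrable_pow 2).const_mul L).const_mul _)
    (ae_of_all _ (hu.abs_sub_fderiv_sqrt_smul_le hL hb0 hb1 y))

lemma exists_abs_variance_sub_le (μ : Measure E) [IsGaussian μ] (hL : 0 ≤ L)
    (hS : ∀ p ∈ S, ‖p‖₊ ≤ K) :
    ∃ C, 0 ≤ C ∧ ∀ (b δ : ℝ) (u v : E → ℝ) (y : E), 0 ≤ b → b ≤ 1 → 0 ≤ δ →
      HasGradientIn S L u → LipschitzWith K v → (∀ y, |v y - u y| ≤ L * δ ^ 2) →
      |Var[fun x => v (y + √(δ ^ 2 * b) • x) - v y; μ] - δ ^ 2 * b * Var[fderiv ℝ u y; μ]|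
        ≤ C * δ ^ 3 := by
  have hnorm := hasExpMoments_norm μ
  have hnormsq : MemLp (fun x => ‖x‖ ^ 2) 2 μ := by
    rw [memLp_two_iff_integrable_sq (by fun_prop)]
    simpa only [← pow_mul] using hnorm.integrable_pow (2 * 2)
  set R : E → ℝ := fun x => K * ‖x‖
  set Q : E → ℝ := fun x => L * (2 + ‖x‖ ^ 2)
  have hR : MemLp R 2 μ := (IsGaussian.memLp_id μ 2 (by norm_num)).norm.const_mul _
  have hQ : MemLp Q 2 μ := ((memLp_const (2 : ℝ)).add hnormsq).const_mul L
  refine ⟨2 * ∫ x, (Q x + ∫ x', Q x' ∂μ) * (R x + ∫ x', R x' ∂μ) ∂μ, by positivity, ?_⟩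
  intro b δ u v y hb0 hb1 hδ hu hv huv
  rw [← Real.sq_sqrt (show 0 ≤ δ ^ 2 * b by positivity), ← variance_const_mul, Real.sq_sqrt
    (by positivity)]
  have hvmeas : AEStronglyMeasurable (fun x => v (y + √(δ ^ 2 * b) • x) - v y) μ :=
    Continuous.aestronglyMeasurable (by have := hv.continuous; fun_prop)
  refine abs_variance_sub_variance_le hR hQ hvmeas (by fun_prop)
    (abs_sub_le_of_lipschitzWith hv hb1 hδ y) (fun x => ?_) (fun x => ?_)
  · rw [abs_mul, abs_of_nonneg (Real.sqrt_nonneg _)]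
    exact mul_le_mul (sqrt_sq_mul_le hb1 hδ) ((fderiv ℝ u y).le_of_opNorm_le
      (hS _ (hu.fderiv_mem y)) x) (abs_nonneg _) hδ
  · have hquad := abs_le.1 (hu.abs_sub_fderiv_sqrt_smul_le (δ := δ) hL hb0 hb1 y x)
    have hend := abs_le.1 (huv (y + √(δ ^ 2 * b) • x))
    have hstart := abs_le.1 (huv y)
    rw [abs_le]
    constructor <;> linarith

/-- Itô's formula in integrated form: the exponent `m` enters the short-time expansion only through
the variance of the gradient. -/
lemma exists_abs_gaussAvg_sub_le (μ : Measure E) [IsGaussian μ] (hL : 0 ≤ L)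
    (hS : ∀ p ∈ S, ‖p‖₊ ≤ K) :
    ∃ C, 0 ≤ C ∧ ∀ (m b δ : ℝ) (u v : E → ℝ) (y : E), 0 ≤ m → m ≤ 1 → 0 ≤ b → b ≤ 1 → 0 ≤ δ →
      δ ≤ 1 → HasGradientIn S L u → LipschitzWith K v → (∀ y, |v y - u y| ≤ L * δ ^ 2) →
      |gaussAvg m μ (δ ^ 2 * b) v y -
        (gaussAvg 0 μ (δ ^ 2 * b) v y + m / 2 * (δ ^ 2 * b * Var[fderiv ℝ u y; μ]))|
        ≤ C * δ ^ 3 := by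
  obtain ⟨C, hC, hmean⟩ :=
    exists_abs_expMean_sub_le ((hasExpMoments_norm μ).const_mul K) fun x => by positivity
  obtain ⟨D, hD, hvar⟩ := exists_abs_variance_sub_le μ hL hS
  refine ⟨C + D, by positivity, ?_⟩
  intro m b δ u v y hm0 hm1 hb0 hb1 hδ0 hδ1 hu hv huv
  set Y : E → ℝ := fun x => v (y + √(δ ^ 2 * b) • x) - v y with hY
  have hshift : ∀ m, gaussAvg m μ (δ ^ 2 * b) v y = expMean m μ Y + v y := fun m => by
    simp only [hY, gaussAvg, sub_eq_add_neg, expMean_add_const (hasExpMoments_shift hv _ y),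
      neg_add_cancel_right]
  have hYmeas : AEMeasurable Y μ :=
    Continuous.aemeasurable (by have := hv.continuous; fun_prop)
  have hexpansion := hmean m δ Y hm0 hm1 hδ0 hδ1 hYmeas (abs_sub_le_of_lipschitzWith hv hb1 hδ0 y)
  have hvariance : |m / 2 * Var[Y; μ] - m / 2 * (δ ^ 2 * b * Var[fderiv ℝ u y; μ])|
      ≤ D * δ ^ 3 := by
    rw [← mul_sub, abs_mul, abs_of_nonneg (by positivity)]
    exact (mul_le_of_le_one_left (abs_nonneg _) (by linarith)).trans
      (hvar b δ u v y hb0 hb1 hδ0 hu hv huv)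
  rw [hshift, hshift, expMean_zero]
  rw [abs_le] at *
  constructor <;> linarith

lemma exists_abs_gaussAvg_sub_self_le {μ : Measure E} [IsGaussian μ] (hμ : μ[id] = 0)
    (hL : 0 ≤ L) (hS : ∀ p ∈ S, ‖p‖₊ ≤ K) :
    ∃ C, 0 ≤ C ∧ ∀ (m b δ : ℝ) (u : E → ℝ) (y : E), 0 ≤ m → m ≤ 1 → 0 ≤ b → b ≤ 1 → 0 ≤ δ →
      δ ≤ 1 → HasGradientIn S L u → |gaussAvg m μ (δ ^ 2 * b) u y - u y| ≤ C * δ ^ 2 := by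
  obtain ⟨C, hC, hexpansion⟩ := exists_abs_gaussAvg_sub_le μ hL hS
  set M : ℝ := ∫ x, ‖x‖ ^ 2 ∂μ with hM
  refine ⟨C + L * M + K ^ 2 * M, by positivity, ?_⟩
  intro m b δ u y hm0 hm1 hb0 hb1 hδ0 hδ1 hu
  have hdrift := abs_gaussAvg_zero_sub_le (δ := δ) hμ hS hu hL hb0 hb1 y
  have hvar : Var[fderiv ℝ u y; μ] ≤ K ^ 2 * M := variance_dual_le μ (hS _ (hu.fderiv_mem y))
  have hcorrection : |m / 2 * (δ ^ 2 * b * Var[fderiv ℝ u y; μ])| ≤ K ^ 2 * M * δ ^ 2 := by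
    have hvar0 := variance_nonneg (fderiv ℝ u y) μ
    rw [abs_of_nonneg (by positivity)]
    calc _ ≤ 1 * (δ ^ 2 * 1 * (K ^ 2 * M)) := by
          gcongr
          linarith
      _ = _ := by ring
  have hcube : C * δ ^ 3 ≤ C * δ ^ 2 :=
    mul_le_mul_of_nonneg_left (pow_le_pow_of_le_one hδ0 hδ1 (by norm_num)) hC
  have hremainder := hexpansion m b δ u u y hm0 hm1 hb0 hb1 hδ0 hδ1 hu (hu.lipschitzWith hS)
    fun y => by rw [sub_self, abs_zero]; positivity
  rw [← hM] at hdrift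
  rw [abs_le] at *
  constructor <;> linarith

lemma exists_gaussAvg_sub_le_gaussAvg_sub {μ ν : Measure E} [IsGaussian μ] [IsGaussian ν]
    {c : ℝ} (hL : 0 ≤ L) (hS : ∀ p ∈ S, ‖p‖₊ ≤ K) (hb0 : 0 ≤ b) (hb1 : b ≤ 1)
    (hvar : ∀ p ∈ S, b * Var[p; ν] - c ≤ Var[p; μ]) :
    ∃ C, ∀ (m' m δ : ℝ) (u v : E → ℝ) (y : E), 0 ≤ m' → m' ≤ m → m ≤ 1 → 0 ≤ δ →
      δ ≤ 1 → HasGradientIn S L u → LipschitzWith K v → (∀ y, |v y - u y| ≤ L * δ ^ 2) →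
      gaussAvg m' μ (δ ^ 2) u y - gaussAvg m' ν (δ ^ 2 * b) v y ≤
        gaussAvg m μ (δ ^ 2) u y - gaussAvg m ν (δ ^ 2 * b) v y
          + (m - m') / 2 * c * δ ^ 2 + C * δ ^ 3 := by
  obtain ⟨C, -, hμexp⟩ := exists_abs_gaussAvg_sub_le μ hL hS
  obtain ⟨D, -, hνexp⟩ := exists_abs_gaussAvg_sub_le ν hL hS
  refine ⟨2 * C + 2 * D, ?_⟩
  intro m' m δ u v y hm'0 hm' hm1 hδ0 hδ1 hu hv huv
  have huu : ∀ y, |u y - u y| ≤ L * δ ^ 2 := fun y => by rw [sub_self, abs_zero]; positivity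
  have hμbound : ∀ r : ℝ, 0 ≤ r → r ≤ 1 → _ := fun r hr0 hr1 => abs_le.1 <|
    hμexp r 1 δ u u y hr0 hr1 zero_le_one le_rfl hδ0 hδ1 hu (hu.lipschitzWith hS) huu
  have hνbound : ∀ r : ℝ, 0 ≤ r → r ≤ 1 → _ := fun r hr0 hr1 => abs_le.1 <|
    hνexp r b δ u v y hr0 hr1 hb0 hb1 hδ0 hδ1 hu hv huv
  have hgain : 0 ≤ (m - m') / 2 * δ ^ 2
      * (Var[fderiv ℝ u y; μ] - (b * Var[fderiv ℝ u y; ν] - c)) :=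
    mul_nonneg (mul_nonneg (by linarith) (sq_nonneg δ)) (sub_nonneg.2 (hvar _ (hu.fderiv_mem y)))
  simp only [mul_one] at hμbound
  linarith [(hμbound m (hm'0.trans hm') hm1).1, (hμbound m' hm'0 (hm'.trans hm1)).2,
    (hνbound m (hm'0.trans hm') hm1).2, (hνbound m' hm'0 (hm'.trans hm1)).1]

end Expansion

section Levels

namespace OrderParam

variable (X : OrderParam) {a b : ℕ}

lemma m_step (ha : a ≤ X.K) : X.m a ≤ X.m (a + 1) := by
  rcases Nat.eq_zero_or_pos a with rfl | ha0
  · exact X.hm0.trans_le X.hm1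
  rcases ha.lt_or_eq with haK | rfl
  · exact X.hm_mono a ha0 haK
  · exact X.hmK.trans_eq X.hmtop.symm

lemma m_mono (hab : a ≤ b) (hb : b ≤ X.K + 1) : X.m a ≤ X.m b := by
  induction b, hab using Nat.le_induction with
  | base => rfl
  | succ b _ ih => exact (ih (by lia)).trans (X.m_step (by lia))

lemma m_nonneg (ha : a ≤ X.K + 1) : 0 ≤ X.m a := X.hm0.symm.trans_le (X.m_mono a.zero_le ha)

lemma m_le_one (ha : a ≤ X.K + 1) : X.m a ≤ 1 := (X.m_mono ha le_rfl).trans_eq X.hmtop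

lemma q_mono (hab : a ≤ b) (hb : b ≤ X.K) : X.q a ≤ X.q b := by
  induction b, hab using Nat.le_induction with
  | base => rfl
  | succ b _ ih => exact (ih (by lia)).trans (X.hq_mono b (by lia))

lemma q_nonneg (ha : a ≤ X.K) : 0 ≤ X.q a := X.hq0.symm.trans_le (X.q_mono a.zero_le ha)

lemma q_le_one (ha : a ≤ X.K) : X.q a ≤ 1 := (X.q_mono ha le_rfl).trans_eq X.hqK

end OrderParam

variable {E : Type*} [NormedAddCommGroup E] [NormedSpace ℝ E] [MeasurableSpace E]

/-- The Parisi recursion on `E`: the functional of the `j` innermost levels of the cascade with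
field covariance that of `ν`, run for interpolation time `s`, starting from `φ`. -/
def levelFn (X : OrderParam) (ν : Measure E) (φ : E → ℝ) : ℕ → ℝ → E → ℝ
  | 0, _ => φ
  | j + 1, s =>
    gaussAvg (X.m (X.K - j)) ν (s * (X.q (X.K - j) - X.q (X.K - j - 1))) (levelFn X ν φ j s)

/-- The rate, per unit of interpolation time, of the error in comparing the cascade with the
two-body field over the `j + 1` innermost exponents: `d` is the cost at exponent `1` and `c a`
bounds the excess variance at overlap `q a`. -/
def levelCost (X : OrderParam) (d : ℝ) (c : ℕ → ℝ) (j : ℕ) : ℝ :=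
  d + ∑ i ∈ Finset.range (j + 1), (X.m (X.K - i + 1) - X.m (X.K - i)) / 2 * c (X.K - i)

lemma levelFn_time_zero (X : OrderParam) (ν : Measure E) [IsProbabilityMeasure ν] (φ : E → ℝ)
    (j : ℕ) : levelFn X ν φ j 0 = φ := by
  induction j with
  | zero => rfl
  | succ j ih => ext y; rw [levelFn, zero_mul, gaussAvg_time_zero, ih]

variable [BorelSpace E] [FiniteDimensional ℝ E] {X : OrderParam} {μ ν : Measure E} [IsGaussian μ]
  [IsGaussian ν] {S : Set (StrongDual ℝ E)} {K : NNReal} {L d : ℝ} {c : ℕ → ℝ} {φ : E → ℝ} {j : ℕ}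

variable (hconv : Convex ℝ S) (hclosed : IsClosed S) (hS : ∀ p ∈ S, ‖p‖₊ ≤ K)
  (hφ : HasGradientIn S L φ)

include hconv hclosed hS hφ

lemma hasGradientIn_levelFn (hj : j ≤ X.K) (s : ℝ) :
    HasGradientIn S (L + j * (K ^ 2 / 2)) (levelFn X ν φ j s) := by
  induction j with
  | zero => rwa [Nat.cast_zero, zero_mul, add_zero]
  | succ j ih =>
    rw [Nat.cast_succ, add_one_mul, ← add_assoc]
    exact hasGradientIn_gaussAvg hconv hclosed hS (X.m_nonneg (by lia)) (X.m_le_one (by lia))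
      (ih (by lia))

lemma lipschitzWith_levelFn (hj : j ≤ X.K) (s : ℝ) : LipschitzWith K (levelFn X ν φ j s) :=
  (hasGradientIn_levelFn hconv hclosed hS hφ hj s).lipschitzWith hS

lemma exists_abs_levelFn_sub_le (hL : 0 ≤ L) (hν : ν[id] = 0) (hj : j ≤ X.K) :
    ∃ C, 0 ≤ C ∧ ∀ (s δ : ℝ) (y : E), 0 ≤ s → 0 ≤ δ → δ ≤ 1 →
      |levelFn X ν φ j (s + δ ^ 2) y - levelFn X ν φ j s y| ≤ C * δ ^ 2 := by
  induction j with
  | zero => exact ⟨0, le_rfl, fun s δ y _ _ _ => by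
      simp only [levelFn, sub_self, abs_zero, zero_mul, le_refl]⟩
  | succ j ih =>
    obtain ⟨C, hC, hprev⟩ := ih (by lia)
    obtain ⟨D, hD, hnear⟩ := exists_abs_gaussAvg_sub_self_le (L := L + (j + 1 : ℕ) * (K ^ 2 / 2))
      hν (by positivity) hS
    refine ⟨C + D, by positivity, fun s δ y hs hδ0 hδ1 => ?_⟩
    set m := X.m (X.K - j)
    set Δ := X.q (X.K - j) - X.q (X.K - j - 1)
    have hm0 : 0 ≤ m := X.m_nonneg (by lia)
    have hΔ0 : 0 ≤ Δ := sub_nonneg.2 (X.q_mono (by lia) (by lia))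
    have hΔ1 : Δ ≤ 1 := (sub_le_self _ (X.q_nonneg (by lia))).trans (X.q_le_one (by lia))
    have hlip := fun s => lipschitzWith_levelFn hconv hclosed hS hφ (ν := ν) (X := X)
      (j := j) (by lia) s
    have hinner : |levelFn X ν φ (j + 1) (s + δ ^ 2) y
        - gaussAvg m ν ((s + δ ^ 2) * Δ) (levelFn X ν φ j s) y| ≤ C * δ ^ 2 :=
      abs_gaussAvg_sub_le hm0 (hlip _) (hlip _) (fun y => hprev s δ y hs hδ0 hδ1) y
    have houter : |gaussAvg m ν ((s + δ ^ 2) * Δ) (levelFn X ν φ j s) y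
        - levelFn X ν φ (j + 1) s y| ≤ D * δ ^ 2 := by
      rw [add_comm s, add_mul, ← gaussAvg_gaussAvg hν (hlip s) (by positivity) (by positivity)]
      exact hnear m Δ δ _ y hm0 (X.m_le_one (by lia)) hΔ0 hΔ1 hδ0 hδ1
        (hasGradientIn_levelFn hconv hclosed hS hφ hj s)
    linarith [abs_sub_le (levelFn X ν φ (j + 1) (s + δ ^ 2) y)
      (gaussAvg m ν ((s + δ ^ 2) * Δ) (levelFn X ν φ j s) y) (levelFn X ν φ (j + 1) s y)]

lemma exists_gaussAvg_levelFn_le_of_exponent_succ (hL : 0 ≤ L) (hν : ν[id] = 0) (hj : j ≤ X.K)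
    {c : ℝ} (hvar : ∀ p ∈ S, X.q (X.K - j) * Var[p; ν] - c ≤ Var[p; μ]) :
    ∃ C, ∀ (s δ D : ℝ) (y : E), 0 ≤ s → 0 ≤ δ → δ ≤ 1 →
      gaussAvg (X.m (X.K - j + 1)) μ (δ ^ 2) (levelFn X ν φ j s) y ≤
        gaussAvg (X.m (X.K - j + 1)) ν (δ ^ 2 * X.q (X.K - j)) (levelFn X ν φ j (s + δ ^ 2)) y
          + D →
      gaussAvg (X.m (X.K - j)) μ (δ ^ 2) (levelFn X ν φ j s) y ≤
        gaussAvg (X.m (X.K - j)) ν (δ ^ 2 * X.q (X.K - j)) (levelFn X ν φ j (s + δ ^ 2)) y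
          + (D + (X.m (X.K - j + 1) - X.m (X.K - j)) / 2 * c * δ ^ 2 + C * δ ^ 3) := by
  obtain ⟨C, hC, hclose⟩ := exists_abs_levelFn_sub_le hconv hclosed hS hφ hL hν hj
  obtain ⟨D, hcompare⟩ := exists_gaussAvg_sub_le_gaussAvg_sub (L := L + j * (K ^ 2 / 2) + C)
    (by positivity) hS (X.q_nonneg (by lia)) (X.q_le_one (by lia)) hvar
  refine ⟨D, fun s δ B y hs hδ0 hδ1 hB => ?_⟩
  have hgrad : HasGradientIn S (L + j * (K ^ 2 / 2) + C) (levelFn X ν φ j s) :=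
    (hasGradientIn_levelFn hconv hclosed hS hφ hj s).mono (le_add_of_nonneg_right hC)
  have hnear : ∀ y, |levelFn X ν φ j (s + δ ^ 2) y - levelFn X ν φ j s y|
      ≤ (L + j * (K ^ 2 / 2) + C) * δ ^ 2 := fun y =>
    (hclose s δ y hs hδ0 hδ1).trans <|
      mul_le_mul_of_nonneg_right (le_add_of_nonneg_left (by positivity)) (sq_nonneg δ)
  linarith [hcompare (X.m (X.K - j)) (X.m (X.K - j + 1)) δ _ _ y (X.m_nonneg (by lia))
    (X.m_step (by lia)) (X.m_le_one (by lia)) hδ0 hδ1 hgrad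
    (lipschitzWith_levelFn hconv hclosed hS hφ hj (s + δ ^ 2)) hnear]

lemma gaussAvg_levelFn_succ_le (hν : ν[id] = 0) (hj : j < X.K) {s ε D : ℝ} (hs : 0 ≤ s)
    (hε : 0 ≤ ε)
    (h : ∀ y, gaussAvg (X.m (X.K - j)) μ ε (levelFn X ν φ j s) y ≤
      gaussAvg (X.m (X.K - j)) ν (ε * X.q (X.K - j)) (levelFn X ν φ j (s + ε)) y + D) (y : E) :
    gaussAvg (X.m (X.K - j)) μ ε (levelFn X ν φ (j + 1) s) y ≤
      gaussAvg (X.m (X.K - j)) ν (ε * X.q (X.K - j - 1)) (levelFn X ν φ (j + 1) (s + ε)) y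
        + D := by
  have hm : 0 ≤ X.m (X.K - j) := X.m_nonneg (by lia)
  have hq : 0 ≤ X.q (X.K - j) := X.q_nonneg (by lia)
  have hq' : 0 ≤ X.q (X.K - j - 1) := X.q_nonneg (by lia)
  have hΔ : 0 ≤ X.q (X.K - j) - X.q (X.K - j - 1) := sub_nonneg.2 (X.q_mono (by lia) (by lia))
  have hlip := fun s => lipschitzWith_levelFn hconv hclosed hS hφ (ν := ν) hj.le s
  have hstep := gaussAvg_le_add (μ := ν) (s := s * (X.q (X.K - j) - X.q (X.K - j - 1))) hm
    (lipschitzWith_gaussAvg hm (hlip s)) (lipschitzWith_gaussAvg hm (hlip (s + ε))) h y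
  rwa [gaussAvg_comm (hlip s), gaussAvg_gaussAvg hν (hlip (s + ε)) (by positivity) (by positivity),
    show s * (X.q (X.K - j) - X.q (X.K - j - 1)) + ε * X.q (X.K - j)
      = ε * X.q (X.K - j - 1) + (s + ε) * (X.q (X.K - j) - X.q (X.K - j - 1)) by ring,
    ← gaussAvg_gaussAvg hν (hlip (s + ε)) (by positivity) (by positivity)] at hstep

lemma exists_gaussAvg_levelFn_le (hL : 0 ≤ L) (hν : ν[id] = 0)
    (hd : ∀ ε y, 0 ≤ ε → gaussAvg 1 μ ε φ y ≤ gaussAvg 1 ν ε φ y + d * ε)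
    (hvar : ∀ a ≤ X.K, ∀ p ∈ S, X.q a * Var[p; ν] - c a ≤ Var[p; μ]) (hj : j ≤ X.K) :
    ∃ C, ∀ (s δ : ℝ) (y : E), 0 ≤ s → 0 ≤ δ → δ ≤ 1 →
      gaussAvg (X.m (X.K - j)) μ (δ ^ 2) (levelFn X ν φ j s) y ≤
        gaussAvg (X.m (X.K - j)) ν (δ ^ 2 * X.q (X.K - j)) (levelFn X ν φ j (s + δ ^ 2)) y
          + (levelCost X d c j * δ ^ 2 + C * δ ^ 3) := by
  have hexponent := fun j (hj : j ≤ X.K) => exists_gaussAvg_levelFn_le_of_exponent_succ hconv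
    hclosed hS hφ hL hν hj (hvar (X.K - j) (by lia))
  induction j with
  | zero =>
    obtain ⟨C, hC⟩ := hexponent 0 hj
    refine ⟨C, fun s δ y hs hδ0 hδ1 => ?_⟩
    have hcost : levelCost X d c 0 = d + (X.m (X.K - 0 + 1) - X.m (X.K - 0)) / 2 * c (X.K - 0) := by
      rw [levelCost, zero_add, Finset.sum_range_one]
    refine (hC s δ (d * δ ^ 2) y hs hδ0 hδ1 ?_).trans_eq (by rw [hcost]; ring)
    rw [Nat.sub_zero, X.hmtop, X.hqK, mul_one]
    exact hd _ y (sq_nonneg δ)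
  | succ j ih =>
    obtain ⟨C, hC⟩ := hexponent (j + 1) hj
    obtain ⟨D, hlevel⟩ := ih (by lia)
    refine ⟨D + C, fun s δ y hs hδ0 hδ1 => ?_⟩
    have hstep := gaussAvg_levelFn_succ_le hconv hclosed hS hφ hν hj hs (sq_nonneg δ)
      (fun y => hlevel s δ y hs hδ0 hδ1) y
    have hcost : levelCost X d c (j + 1) = levelCost X d c j
        + (X.m (X.K - (j + 1) + 1) - X.m (X.K - (j + 1))) / 2 * c (X.K - (j + 1)) := by
      rw [levelCost, Finset.sum_range_succ, ← add_assoc, levelCost]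
    refine (hC s δ (levelCost X d c j * δ ^ 2 + D * δ ^ 3) y hs hδ0 hδ1 ?_).trans_eq
      (by rw [hcost]; ring)
    rw [show X.K - (j + 1) + 1 = X.K - j by lia, ← Nat.sub_sub]
    exact hstep

lemma gaussAvg_zero_le_levelFn_add_of_step (hμ : μ[id] = 0) {ε η : ℝ} (hε : 0 ≤ ε)
    (hstep : ∀ s y, 0 ≤ s → gaussAvg 0 μ ε (levelFn X ν φ X.K s) y
      ≤ levelFn X ν φ X.K (s + ε) y + η) (n : ℕ) (y : E) :
    gaussAvg 0 μ (n * ε) φ y ≤ levelFn X ν φ X.K (n * ε) y + n * η := by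
  induction n generalizing y with
  | zero => rw [Nat.cast_zero, zero_mul, zero_mul, gaussAvg_time_zero, levelFn_time_zero, add_zero]
  | succ n ih =>
    have hlip := hφ.lipschitzWith hS
    have hn : 0 ≤ n * ε := by positivity
    rw [Nat.cast_succ, add_one_mul, add_one_mul, add_comm (n * ε),
      ← gaussAvg_gaussAvg hμ hlip hε hn]
    have haverage := gaussAvg_le_add (μ := μ) (s := ε) le_rfl (lipschitzWith_gaussAvg le_rfl hlip)
      (lipschitzWith_levelFn hconv hclosed hS hφ le_rfl (n * ε)) ih y
    rw [add_comm ε]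
    linarith [hstep (n * ε) y hn]

lemma gaussAvg_zero_le_levelFn_add_levelCost (hL : 0 ≤ L) (hμ : μ[id] = 0) (hν : ν[id] = 0)
    (hd : ∀ ε y, 0 ≤ ε → gaussAvg 1 μ ε φ y ≤ gaussAvg 1 ν ε φ y + d * ε)
    (hvar : ∀ a ≤ X.K, ∀ p ∈ S, X.q a * Var[p; ν] - c a ≤ Var[p; μ]) (y : E) :
    gaussAvg 0 μ 1 φ y ≤ levelFn X ν φ X.K 1 y + levelCost X d c X.K := by
  obtain ⟨C, hlevel⟩ :=
    exists_gaussAvg_levelFn_le hconv hclosed hS hφ hL hν hd hvar (le_refl X.K)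
  simp only [Nat.sub_self, X.hm0, X.hq0, mul_zero, gaussAvg_time_zero] at hlevel
  have hsteps : ∀ n : ℕ, gaussAvg 0 μ 1 φ y
      ≤ levelFn X ν φ X.K 1 y + levelCost X d c X.K + C * √(1 / ((n : ℝ) + 1)) := fun n => by
    set δ : ℝ := √(1 / ((n : ℝ) + 1))
    have hδsq : δ ^ 2 = 1 / ((n : ℝ) + 1) := Real.sq_sqrt (by positivity)
    have hδ1 : δ ≤ 1 := Real.sqrt_le_one.2
      ((div_le_one (by positivity)).2 (le_add_of_nonneg_left n.cast_nonneg))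
    have htotal : ((n + 1 : ℕ) : ℝ) * δ ^ 2 = 1 := by
      rw [hδsq, Nat.cast_succ, mul_one_div_cancel (by positivity)]
    have hiterate := gaussAvg_zero_le_levelFn_add_of_step hconv hclosed hS hφ hμ (sq_nonneg δ)
      (fun s y hs => hlevel s δ y hs (Real.sqrt_nonneg _) hδ1) (n + 1) y
    rw [htotal] at hiterate
    refine hiterate.trans_eq ?_
    linear_combination (levelCost X d c X.K + C * δ) * htotal
  have hlimit : Tendsto (fun n : ℕ => levelFn X ν φ X.K 1 y + levelCost X d c X.K
      + C * √(1 / ((n : ℝ) + 1))) atTop (nhds (levelFn X ν φ X.K 1 y + levelCost X d c X.K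
      + C * √0)) :=
    (((Real.continuous_sqrt.tendsto 0).comp tendsto_one_div_add_atTop_nhds_zero_nat).const_mul
      C).const_add _
  simpa only [Real.sqrt_zero, mul_zero, add_zero] using ge_of_tendsto' hlimit hsteps

end Levels

section GaussianProduct

lemma isGaussian_pi {ι : Type*} [Fintype ι] {E : ι → Type*} [∀ i, NormedAddCommGroup (E i)]
    [∀ i, NormedSpace ℝ (E i)] [∀ i, MeasurableSpace (E i)] [∀ i, BorelSpace (E i)]
    [∀ i, SecondCountableTopology (E i)] [∀ i, CompleteSpace (E i)] (μ : ∀ i, Measure (E i))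
    [∀ i, IsGaussian (μ i)] : IsGaussian (Measure.pi μ) := by
  have hlaw : HasGaussianLaw (fun x i => x i) (Measure.pi μ) :=
    (iIndepFun_pi (X := fun _ => id) fun _ => aemeasurable_id).hasGaussianLaw fun i =>
      ⟨by simpa only [id_eq, (measurePreserving_eval μ i).map_eq] using ‹∀ i, IsGaussian (μ i)› i⟩
  simpa only [Measure.map_id'] using hlaw.isGaussian_map

variable {E F : Type*} [NormedAddCommGroup E] [NormedSpace ℝ E] [MeasurableSpace E] [BorelSpace E]
  [CompleteSpace E] [SecondCountableTopology E] [NormedAddCommGroup F] [NormedSpace ℝ F]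
  [MeasurableSpace F] [BorelSpace F] [CompleteSpace F] [SecondCountableTopology F]

lemma integral_id_map_eq_zero {γ : Measure F} [IsGaussian γ] (hγ : γ[id] = 0) (A : F →L[ℝ] E) :
    (γ.map A)[id] = 0 := by
  rw [integral_map A.continuous.measurable.aemeasurable aestronglyMeasurable_id]
  calc ∫ x, A x ∂γ = A (∫ x, x ∂γ) := A.integral_comp_comm IsGaussian.integrable_id
    _ = 0 := by rw [show ∫ x, x ∂γ = 0 from hγ, map_zero]

lemma integral_id_pi_eq_zero {ι : Type*} [Fintype ι] (μ : ι → Measure F) [∀ i, IsGaussian (μ i)]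
    (hμ : ∀ i, (μ i)[id] = 0) : (Measure.pi μ)[id] = 0 := by
  ext i
  have hint : ∀ i, Integrable (fun x : ι → F => x i) (Measure.pi μ) := fun i =>
    integrable_comp_eval (f := id) IsGaussian.integrable_id
  exact (eval_integral hint i).trans <| (integral_comp_eval (μ := μ) (f := id)
    aestronglyMeasurable_id).trans (hμ i)

lemma expMean_strongDual {μ : Measure E} [IsGaussian μ] (hμ : μ[id] = 0) (m : ℝ)
    (p : StrongDual ℝ E) : expMean m μ p = m / 2 * Var[p; μ] := by
  have hmean : μ[p] = 0 := by
    rw [IsGaussian.integral_dual, show ∫ x, x ∂μ = 0 from hμ, map_zero]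
  rcases eq_or_ne m 0 with rfl | hm
  · rw [expMean_zero, hmean, zero_div, zero_mul]
  have hmgf : mgf p μ m = Real.exp (Var[p; μ] * m ^ 2 / 2) := by
    rw [mgf_gaussianReal (IsGaussian.map_eq_gaussianReal p), hmean,
      Real.coe_toNNReal _ (variance_nonneg _ _), zero_mul, zero_add]
  rw [expMean_of_ne_zero hm, show ∫ x, Real.exp (m * p x) ∂μ = mgf p μ m from rfl, hmgf,
    Real.log_exp]
  field_simp

end GaussianProduct

section States

variable {ι κ : Type*} {p : StrongDual ℝ (ι → ℝ)} {m v : ℝ}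

/-- The states on the observables `ι → ℝ`: the normalised positive functionals, that is, the
expectations with respect to probability vectors on `ι`. -/
def states (ι : Type*) : Set (StrongDual ℝ (ι → ℝ)) :=
  {p | (∀ x, 0 ≤ x → 0 ≤ p x) ∧ p 1 = 1}

lemma convex_states : Convex ℝ (states ι) := by
  rintro p ⟨hp, hp1⟩ q ⟨hq, hq1⟩ a b ha hb hab
  refine ⟨fun x hx => ?_, ?_⟩
  · exact add_nonneg (mul_nonneg ha (hp x hx)) (mul_nonneg hb (hq x hx))
  · change a * p 1 + b * q 1 = 1
    rw [hp1, hq1, mul_one, mul_one, hab]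

lemma isClosed_states : IsClosed (states ι) := by
  have heval : ∀ x : ι → ℝ, Continuous fun p : StrongDual ℝ (ι → ℝ) => p x := fun x =>
    continuous_eval_const x
  have hpos : IsClosed {p : StrongDual ℝ (ι → ℝ) | ∀ x, 0 ≤ x → 0 ≤ p x} := by
    simp only [Set.ofPred_forall]
    exact isClosed_iInter fun x => isClosed_iInter fun _ => isClosed_le continuous_const (heval x)
  exact hpos.inter (isClosed_eq (heval 1) continuous_const)

lemma proj_mem_states (i : ι) : ContinuousLinearMap.proj i ∈ states ι :=
  ⟨fun _ hx => hx i, rfl⟩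

lemma map_sq_le_map_sq (hp : p ∈ states ι) (x : ι → ℝ) : p x ^ 2 ≤ p (x ^ 2) := by
  have hpos := hp.1 ((x - p x • 1) ^ 2) fun i => sq_nonneg _
  have hexpand : (x - p x • 1) ^ 2 = x ^ 2 - (2 * p x) • x + p x ^ 2 • 1 := by
    ext i; simp; ring
  rw [hexpand, map_add, map_sub, map_smul, map_smul, hp.2, smul_eq_mul, smul_eq_mul] at hpos
  linarith

/-- For two replicas with overlap `R = ∑ i, f i ⊗ f i`, this is `⟨R⟩² ≤ ⟨R²⟩`. -/
lemma sq_sum_sq_le_sum_sum_sq [Fintype κ] (hp : p ∈ states ι) (f : κ → ι → ℝ) :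
    (∑ i, p (f i) ^ 2) ^ 2 ≤ ∑ i, ∑ j, p (f i * f j) ^ 2 := by
  set g : ι → ℝ := ∑ i, p (f i) • f i
  have hg : p g = ∑ i, p (f i) ^ 2 := by simp only [g, map_sum, map_smul, smul_eq_mul, sq]
  have hg2 : p (g ^ 2) = ∑ i, ∑ j, p (f i) * p (f j) * p (f i * f j) := by
    simp only [g, sq, Finset.sum_mul_sum, map_sum, smul_mul_smul_comm, map_smul, smul_eq_mul]
  have hprod : (∑ i, p (f i) ^ 2) ^ 2 = ∑ i, ∑ j, (p (f i) * p (f j)) ^ 2 := by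
    simp only [sq (∑ i, p (f i) ^ 2), Finset.sum_mul_sum, mul_pow]
  have hsquares : 0 ≤ ∑ i, ∑ j, (p (f i * f j) - p (f i) * p (f j)) ^ 2 := by positivity
  have hexpand : ∑ i, ∑ j, (p (f i * f j) - p (f i) * p (f j)) ^ 2
      = ∑ i, ∑ j, p (f i * f j) ^ 2 - 2 * p (g ^ 2) + (∑ i, p (f i) ^ 2) ^ 2 := by
    simp only [hg2, hprod, Finset.mul_sum, ← Finset.sum_add_distrib, ← Finset.sum_sub_distrib]
    exact Finset.sum_congr rfl fun i _ => Finset.sum_congr rfl fun j _ => by ring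
  have hvar := map_sq_le_map_sq hp g
  rw [hg] at hvar
  linarith

lemma nnnorm_le_one_of_mem_states [Fintype ι] (hp : p ∈ states ι) : ‖p‖₊ ≤ 1 := by
  refine p.opNorm_le_bound zero_le_one fun x => ?_
  have hle : ∀ x : ι → ℝ, p x ≤ ‖x‖ := fun x => by
    have hpos := hp.1 (‖x‖ • 1 - x) fun i => by
      simpa using (Real.le_norm_self (x i)).trans (norm_le_pi_norm x i)
    rwa [map_sub, map_smul, hp.2, smul_eq_mul, mul_one, sub_nonneg] at hpos
  rw [Real.norm_eq_abs, abs_le', NNReal.val_eq_coe, NNReal.coe_one, one_mul]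
  exact ⟨hle x, by simpa only [map_neg, norm_neg] using hle (-x)⟩

variable [MeasurableSpace ι] [MeasurableSingletonClass ι] (ρ : Measure ι) [IsProbabilityMeasure ρ]

lemma hasExpMoments_of_finite [Finite ι] (x : ι → ℝ) : HasExpMoments x ρ := fun _ => .of_finite

variable [Fintype ι]

lemma lipschitzWith_expMean (hm : 0 ≤ m) : LipschitzWith 1 (expMean m ρ : (ι → ℝ) → ℝ) :=
  LipschitzWith.of_dist_le_mul fun x y => by
    rw [NNReal.coe_one, one_mul]
    exact abs_expMean_sub_le hm (hasExpMoments_of_finite ρ x) (hasExpMoments_of_finite ρ y)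
      (dist_le_pi_dist x y)

lemma hasGradientIn_states_expMean (hm0 : 0 ≤ m) (hm1 : m ≤ 1) :
    HasGradientIn (states ι) (1 / 2) (expMean m ρ) := by
  have h := hasGradientIn_expMean (μ := ρ) (U := fun i (y : ι → ℝ) => y i) convex_states
    isClosed_states (fun p => nnnorm_le_one_of_mem_states) hm0 hm1
    (fun i => hasGradientIn_of_mem (proj_mem_states i))
    (fun y => (measurable_of_countable _).aestronglyMeasurable)
    (fun y => hasExpMoments_of_finite ρ y)
  simpa using h

lemma gaussAvg_one_expMean {μ : Measure (ι → ℝ)} [IsGaussian μ] (hμ : μ[id] = 0)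
    (hv : ∀ i, Var[fun x => x i; μ] = v) {ε : ℝ} (hε : 0 ≤ ε) (y : ι → ℝ) :
    gaussAvg 1 μ ε (expMean 1 ρ) y = expMean 1 ρ y + v / 2 * ε := by
  have hvar : ∀ i, expMean 1 μ (fun x => √ε * x i) = v / 2 * ε := fun i => by
    calc expMean 1 μ (fun x => √ε * x i) = 1 / 2 * Var[fun x => √ε * x i; μ] :=
          expMean_strongDual hμ 1
            (√ε • ContinuousLinearMap.proj (R := ℝ) (φ := fun _ : ι => ℝ) i)
      _ = v / 2 * ε := by rw [variance_const_mul, hv, Real.sq_sqrt hε]; ring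
  have hmoments : ∀ i, HasExpMoments (fun x : ι → ℝ => √ε * x i) μ := fun i =>
    (hasExpMoments_of_lipschitzWith (LipschitzWith.eval i) μ).const_mul _
  have hjoint : HasExpMoments (fun z : (ι → ℝ) × ι => y z.2 + √ε * z.1 z.2) (μ.prod ρ) := by
    have hnorm : HasExpMoments (fun z : (ι → ℝ) × ι => ‖z.1‖) (μ.prod ρ) := fun t =>
      (hasExpMoments_norm μ t).comp_fst ρ
    refine ((hnorm.const_mul √ε).const_add ‖y‖).of_abs_le
      (measurable_from_prod_countable_left fun i => by fun_prop).aemeasurable fun z => ?_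
    refine (abs_add_le _ _).trans (add_le_add (norm_le_pi_norm y z.2) ?_)
    rw [abs_mul, abs_of_nonneg (Real.sqrt_nonneg ε)]
    exact mul_le_mul_of_nonneg_left (norm_le_pi_norm z.1 z.2) (Real.sqrt_nonneg ε)
  calc gaussAvg 1 μ ε (expMean 1 ρ) y
      = expMean 1 ρ fun i => expMean 1 μ fun x => y i + √ε * x i := expMean_comm hjoint
    _ = expMean 1 ρ fun i => y i + v / 2 * ε := by
        simp only [add_comm (y _), expMean_add_const (hmoments _), hvar]
    _ = expMean 1 ρ y + v / 2 * ε := expMean_add_const (hasExpMoments_of_finite ρ y)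

end States

section SpinSystem

/-- A fair coin, so that `Measure.pi fun _ => fairCoin` is the uniform measure on spin
configurations. -/
def fairCoin : Measure Bool := uniformOn Set.univ

instance : IsProbabilityMeasure fairCoin := by unfold fairCoin; infer_instance

/-- The observable `σ ↦ σᵢ`. -/
def spinAt (N : ℕ) (i : Fin N) : (Fin N → Bool) → ℝ := fun σ => spin (σ i)

/-- The energies `β ∑ᵢ gᵢ σᵢ` of all configurations in the external field `g`. -/
def oneBodyField (N : ℕ) (β : ℝ) : (Fin N → ℝ) →L[ℝ] ((Fin N → Bool) → ℝ) :=
  ∑ i, (ContinuousLinearMap.proj i).smulRight (β • spinAt N i)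

/-- The energies `(β / √N) ∑_{i<j} Jᵢⱼ σᵢ σⱼ` of all configurations for the couplings `J`. -/
def twoBodyField (N : ℕ) (β : ℝ) : (Fin N → Fin N → ℝ) →L[ℝ] ((Fin N → Bool) → ℝ) :=
  ∑ i, ∑ j, ((ContinuousLinearMap.proj j).comp
    (ContinuousLinearMap.proj (R := ℝ) (φ := fun _ => Fin N → ℝ) i)).smulRight
      (if i < j then (β / √N) • (spinAt N i * spinAt N j) else 0)

variable (N : ℕ) (β : ℝ)

instance : IsGaussian stdGauss := by unfold stdGauss; infer_instance

instance : IsGaussian (gaussN N) := isGaussian_pi _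

instance : IsGaussian (gaussC N) := isGaussian_pi _

lemma integral_id_gaussN : (gaussN N)[id] = 0 :=
  integral_id_pi_eq_zero _ fun _ => integral_id_gaussianReal

lemma integral_id_gaussC : (gaussC N)[id] = 0 :=
  integral_id_pi_eq_zero _ fun _ => integral_id_gaussN N

variable {N}

lemma variance_sum_gaussN (a : Fin N → ℝ) :
    Var[fun g => ∑ i, g i * a i; gaussN N] = ∑ i, a i ^ 2 := by
  have h := variance_sum_pi (μ := fun _ : Fin N => stdGauss) (X := fun i z => z * a i)
    fun i => (IsGaussian.memLp_two_id (μ := stdGauss)).mul_const (a i)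
  rw [show (fun g : Fin N → ℝ => ∑ i, g i * a i) = ∑ i, fun g : Fin N → ℝ => g i * a i by
    ext g; simp only [Finset.sum_apply], gaussN, h]
  refine Finset.sum_congr rfl fun i _ => ?_
  rw [variance_mul_const, stdGauss, variance_fun_id_gaussianReal]
  simp

lemma variance_sum_gaussC (a : Fin N → Fin N → ℝ) :
    Var[fun J => ∑ i, ∑ j, J i j * a i j; gaussC N] = ∑ i, ∑ j, a i j ^ 2 := by
  have h := variance_sum_pi (μ := fun _ : Fin N => gaussN N) (X := fun i g => ∑ j, g j * a i j)
    fun i => memLp_finsetSum _ fun j _ =>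
      ((IsGaussian.memLp_two_id (μ := stdGauss)).comp_measurePreserving
        (measurePreserving_eval _ j)).mul_const (a i j)
  rw [show (fun J : Fin N → Fin N → ℝ => ∑ i, ∑ j, J i j * a i j)
    = ∑ i, fun J : Fin N → Fin N → ℝ => ∑ j, J i j * a i j by
      ext J; simp only [Finset.sum_apply], gaussC, h]
  simp only [variance_sum_gaussN]

lemma spin_mul_self (b : Bool) : spin b * spin b = 1 := by
  cases b <;> simp [spin]

lemma spinAt_mul_self (i : Fin N) : spinAt N i * spinAt N i = 1 :=
  funext fun σ => spin_mul_self (σ i)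

lemma sum_sum_ite_lt {ι : Type*} [Fintype ι] [LinearOrder ι] {f : ι → ι → ℝ}
    (hf : ∀ i j, f i j = f j i) :
    ∑ i, ∑ j, (if i < j then f i j else 0) = (∑ i, ∑ j, f i j - ∑ i, f i i) / 2 := by
  have hsplit : ∀ i j, f i j = (if i < j then f i j else 0) + (if j < i then f j i else 0)
      + if i = j then f i j else 0 := fun i j => by
    rcases lt_trichotomy i j with h | rfl | h
    · simp [h, h.ne, h.not_gt]
    · simp
    · simp [h, h.ne', h.not_gt, hf i j]
  have htotal : ∑ i, ∑ j, f i j = ∑ i, ∑ j, (if i < j then f i j else 0)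
      + ∑ i, ∑ j, (if j < i then f j i else 0) + ∑ i, f i i := by
    rw [Finset.sum_congr rfl fun i _ => Finset.sum_congr rfl fun j _ => hsplit i j]
    simp only [Finset.sum_add_distrib, Finset.sum_ite_eq, Finset.mem_univ, if_true]
  rw [htotal, Finset.sum_comm (f := fun i j => if j < i then f j i else 0)]
  ring

variable {p : StrongDual ℝ ((Fin N → Bool) → ℝ)}

lemma variance_oneBodyField :
    Var[p; (gaussN N).map (oneBodyField N β)] = β ^ 2 * ∑ i, p (spinAt N i) ^ 2 := by
  rw [variance_map p.continuous.measurable.aemeasurable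
    (oneBodyField N β).continuous.measurable.aemeasurable]
  have hexpand : p ∘ oneBodyField N β = fun g => ∑ i, g i * (β * p (spinAt N i)) := by
    ext g
    simp [oneBodyField]
  rw [hexpand, variance_sum_gaussN, Finset.mul_sum]
  simp only [mul_pow]

lemma variance_twoBodyField (hp : p ∈ states (Fin N → Bool)) :
    Var[p; (gaussC N).map (twoBodyField N β)]
      = β ^ 2 / (2 * N) * (∑ i, ∑ j, p (spinAt N i * spinAt N j) ^ 2 - N) := by
  rw [variance_map p.continuous.measurable.aemeasurable
    (twoBodyField N β).continuous.measurable.aemeasurable]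
  have hexpand : p ∘ twoBodyField N β = fun J => ∑ i, ∑ j, J i j *
      (if i < j then β / √N * p (spinAt N i * spinAt N j) else 0) := by
    ext J
    simp [twoBodyField, apply_ite p]
  have hsq : ∀ i j, (if i < j then β / √N * p (spinAt N i * spinAt N j) else 0) ^ 2
      = β ^ 2 / N * if i < j then p (spinAt N i * spinAt N j) ^ 2 else 0 := fun i j => by
    split_ifs
    · rw [mul_pow, div_pow, Real.sq_sqrt N.cast_nonneg]
    · simp
  rw [hexpand, variance_sum_gaussC]
  simp only [hsq, ← Finset.mul_sum]
  rw [sum_sum_ite_lt fun i j => by rw [mul_comm (spinAt N i)]]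
  simp only [spinAt_mul_self, hp.2, one_pow, Finset.sum_const, Finset.card_univ, Fintype.card_fin,
    nsmul_eq_mul, mul_one]
  ring

lemma variance_apply_oneBodyField (σ : Fin N → Bool) :
    Var[fun x => x σ; (gaussN N).map (oneBodyField N β)] = N * β ^ 2 := by
  refine (variance_oneBodyField β (p := ContinuousLinearMap.proj σ)).trans ?_
  simp [spinAt, sq, spin_mul_self, mul_comm]

lemma variance_apply_twoBodyField (hN : 1 ≤ N) (σ : Fin N → Bool) :
    Var[fun x => x σ; (gaussC N).map (twoBodyField N β)] = (N - 1) / 2 * β ^ 2 := by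
  have hN0 : (N : ℝ) ≠ 0 := Nat.cast_ne_zero.2 (by lia)
  have hcount : ∑ i, ∑ j, ContinuousLinearMap.proj (R := ℝ) (φ := fun _ => ℝ) σ
      (spinAt N i * spinAt N j) ^ 2 = N * N := by
    simp [spinAt, sq, mul_mul_mul_comm, spin_mul_self]
  refine (variance_twoBodyField β (proj_mem_states σ)).trans ?_
  rw [hcount]
  field_simp

lemma gaussAvg_one_twoBodyField (hN : 1 ≤ N) (ρ : Measure (Fin N → Bool)) [IsProbabilityMeasure ρ]
    {ε : ℝ} (hε : 0 ≤ ε) (x : (Fin N → Bool) → ℝ) :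
    gaussAvg 1 ((gaussC N).map (twoBodyField N β)) ε (expMean 1 ρ) x
      = gaussAvg 1 ((gaussN N).map (oneBodyField N β)) ε (expMean 1 ρ) x
        + -((N + 1) * β ^ 2 / 4) * ε := by
  rw [gaussAvg_one_expMean ρ (integral_id_map_eq_zero (integral_id_gaussC N) _)
      (variance_apply_twoBodyField β hN) hε,
    gaussAvg_one_expMean ρ (integral_id_map_eq_zero (integral_id_gaussN N) _)
      (variance_apply_oneBodyField β) hε]
  ring

lemma mul_variance_oneBodyField_sub_le (hN : 1 ≤ N) (hp : p ∈ states (Fin N → Bool)) (q : ℝ) :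
    q * Var[p; (gaussN N).map (oneBodyField N β)] - (N * β ^ 2 / 2 * q ^ 2 + β ^ 2 / 2)
      ≤ Var[p; (gaussC N).map (twoBodyField N β)] := by
  have hN0 : (N : ℝ) ≠ 0 := Nat.cast_ne_zero.2 (by lia)
  rw [variance_oneBodyField, variance_twoBodyField β hp, ← sub_nonneg]
  set B := ∑ i, p (spinAt N i) ^ 2
  set A := ∑ i, ∑ j, p (spinAt N i * spinAt N j) ^ 2
  have hreplica : B ^ 2 ≤ A := sq_sum_sq_le_sum_sum_sq hp (spinAt N)
  calc 0 ≤ β ^ 2 / (2 * N) * ((A - B ^ 2) + (B - N * q) ^ 2) :=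
        mul_nonneg (by positivity) (add_nonneg (sub_nonneg.2 hreplica) (sq_nonneg _))
    _ = _ := by field_simp; ring

end SpinSystem

section ParisiRecursion

lemma gaussAvg_map {E F : Type*} [NormedAddCommGroup E] [NormedSpace ℝ E] [MeasurableSpace E]
    [BorelSpace E] [NormedAddCommGroup F] [NormedSpace ℝ F] [MeasurableSpace F] [BorelSpace F]
    {u : E → ℝ} (hu : Continuous u) (A : F →L[ℝ] E) (γ : Measure F) (m s : ℝ) (w : F) :
    gaussAvg m (γ.map A) s u (A w) = gaussAvg m γ s (u ∘ A) w := by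
  have hshift : Measurable fun x => u (A w + √s • x) := by fun_prop
  simp only [gaussAvg, expMean_map A.continuous.measurable.aemeasurable hshift, Function.comp_apply,
    map_add, map_smul]

lemma gaussAvg_pi_sum {ι : Type*} [Fintype ι] {E : ι → Type*} [∀ i, NormedAddCommGroup (E i)]
    [∀ i, NormedSpace ℝ (E i)] [∀ i, MeasurableSpace (E i)] [∀ i, BorelSpace (E i)]
    [∀ i, FiniteDimensional ℝ (E i)] {μ : ∀ i, Measure (E i)} [∀ i, IsGaussian (μ i)]
    {f : ∀ i, E i → ℝ} {K : ι → NNReal} (hf : ∀ i, LipschitzWith (K i) (f i)) (m s : ℝ)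
    (w : ∀ i, E i) : gaussAvg m (Measure.pi μ) s (fun x => ∑ i, f i (x i)) w
      = ∑ i, gaussAvg m (μ i) s (f i) (w i) :=
  expMean_pi_sum fun i => hasExpMoments_shift (hf i) s (w i)

lemma pStep_eq_gaussAvg (m s : ℝ) (g : ℝ → ℝ) : pStep m s g = gaussAvg m stdGauss s g := by
  ext y
  simp only [pStep, gaussAvg, expMean, smul_eq_mul, mul_comm (√s)]

lemma measureReal_fairCoin_singleton (b : Bool) : fairCoin.real {b} = 2⁻¹ := by
  rw [measureReal_def, fairCoin, uniformOn_univ]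
  simp

lemma integral_fairCoin (f : Bool → ℝ) : ∫ b, f b ∂fairCoin = (f true + f false) / 2 := by
  rw [integral_fintype .of_finite, Fintype.sum_bool]
  simp only [measureReal_fairCoin_singleton, smul_eq_mul]
  ring

lemma log_cosh_eq_expMean (β y : ℝ) :
    Real.log (Real.cosh (β * y)) = expMean 1 fairCoin fun b => y * (β * spin b) := by
  rw [expMean_of_ne_zero one_ne_zero, integral_fairCoin, Real.cosh_eq]
  simp [spin, mul_comm y]

lemma log_sum_exp_eq_expMean {N : ℕ} (x : (Fin N → Bool) → ℝ) : Real.log (∑ σ, Real.exp (x σ))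
    = N * Real.log 2 + expMean 1 (Measure.pi fun _ => fairCoin) x := by
  have hmass : ∀ σ : Fin N → Bool, (Measure.pi fun _ => fairCoin).real {σ} = (2⁻¹ : ℝ) ^ N :=
    fun σ => by
      rw [measureReal_def, Measure.pi_singleton, ENNReal.toReal_prod]
      simp only [← measureReal_def, measureReal_fairCoin_singleton, Finset.prod_const,
        Finset.card_univ, Fintype.card_fin]
  have hsum : 0 < ∑ σ, Real.exp (x σ) := by positivity
  rw [expMean_of_ne_zero one_ne_zero, integral_fintype .of_finite]
  simp only [hmass, smul_eq_mul, one_mul, inv_one, ← Finset.mul_sum]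
  rw [Real.log_mul (by positivity) hsum.ne', Real.log_pow, Real.log_inv]
  ring

variable {X : OrderParam} {N j : ℕ} (β : ℝ)

lemma lipschitzWith_levelFn_expMean {ι : Type*} [Fintype ι] [MeasurableSpace ι]
    [MeasurableSingletonClass ι] (ρ : Measure ι) [IsProbabilityMeasure ρ] {ν : Measure (ι → ℝ)}
    [IsGaussian ν] {m : ℝ} (hm0 : 0 ≤ m) (hm1 : m ≤ 1) (hj : j ≤ X.K) (s : ℝ) :
    LipschitzWith 1 (levelFn X ν (expMean m ρ) j s) :=
  lipschitzWith_levelFn (X := X) (ν := ν) convex_states isClosed_states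
    (fun _ => nnnorm_le_one_of_mem_states) (hasGradientIn_states_expMean ρ hm0 hm1) hj s

lemma lipschitzWith_parisiLevel (hj : j ≤ X.K) :
    LipschitzWith ‖β‖₊ (parisiLevel X.K X.q X.m β j) := by
  induction j with
  | zero =>
    refine LipschitzWith.of_dist_le_mul fun y z => ?_
    simp only [parisiLevel, log_cosh_eq_expMean]
    refine abs_expMean_sub_le zero_le_one (hasExpMoments_of_finite _ _)
      (hasExpMoments_of_finite _ _) fun b => ?_
    have habs : |spin b| = 1 := by cases b <;> simp [spin]
    rw [← sub_mul, abs_mul, abs_mul, habs, mul_one, mul_comm]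
    rfl
  | succ j ih =>
    rw [parisiLevel, pStep_eq_gaussAvg]
    exact lipschitzWith_gaussAvg (X.m_nonneg (by lia)) (ih (by lia))

lemma expMean_oneBodyField (w : Fin N → ℝ) :
    expMean 1 (Measure.pi fun _ => fairCoin) (oneBodyField N β w)
      = ∑ i, Real.log (Real.cosh (β * w i)) := by
  have happly : oneBodyField N β w = fun σ => ∑ i, w i * (β * spin (σ i)) := by
    ext σ; simp [oneBodyField, spinAt]
  simp only [happly, log_cosh_eq_expMean]
  exact expMean_pi_sum (f := fun i b => w i * (β * spin b)) fun i => hasExpMoments_of_finite _ _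

lemma levelFn_oneBodyField (hj : j ≤ X.K) (w : Fin N → ℝ) :
    levelFn X ((gaussN N).map (oneBodyField N β)) (expMean 1 (Measure.pi fun _ => fairCoin)) j 1
      (oneBodyField N β w) = ∑ i, parisiLevel X.K X.q X.m β j (w i) := by
  induction j generalizing w with
  | zero => exact expMean_oneBodyField β w
  | succ j ih =>
    have hcont : Continuous (levelFn X ((gaussN N).map (oneBodyField N β))
        (expMean 1 (Measure.pi fun _ => fairCoin)) j 1) :=
      (lipschitzWith_levelFn_expMean _ zero_le_one le_rfl (by lia) 1).continuous
    have hsum := funext (ih (by lia))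
    have hlip : LipschitzWith ‖β‖₊ (parisiLevel X.K X.q X.m β j) :=
      lipschitzWith_parisiLevel β (by lia)
    simp only [levelFn, one_mul, gaussAvg_map hcont, Function.comp_def, hsum, parisiLevel,
      pStep_eq_gaussAvg]
    exact gaussAvg_pi_sum (fun _ => hlip) _ _ w

lemma neg_mul_hamSK (h : ℝ) (J : Fin N → Fin N → ℝ) (σ : Fin N → Bool) :
    -(β * hamSK N h J σ) = (oneBodyField N β (fun _ => h) + twoBodyField N β J) σ := by
  have honeBody : oneBodyField N β (fun _ => h) σ = β * (h * ∑ i, spin (σ i)) := by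
    simp [oneBodyField, spinAt, Finset.mul_sum, mul_left_comm]
  have htwoBody : twoBodyField N β J σ = β * (1 / √N *
      ∑ i, ∑ j, if i < j then J i j * spin (σ i) * spin (σ j) else 0) := by
    simp only [twoBodyField, Finset.mul_sum, sum_apply, Finset.sum_apply]
    refine Finset.sum_congr rfl fun i _ => Finset.sum_congr rfl fun j _ => ?_
    split_ifs
    · simp [spinAt]
      ring
    · simp
  rw [Pi.add_apply, honeBody, htwoBody, hamSK]
  ring

lemma integral_log_ZSK (h : ℝ) : ∫ J, Real.log (ZSK N β h J) ∂gaussC N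
    = N * Real.log 2 + gaussAvg 0 ((gaussC N).map (twoBodyField N β)) 1
      (expMean 1 (Measure.pi fun _ => fairCoin)) (oneBodyField N β fun _ => h) := by
  have hlip : LipschitzWith 1 (expMean 1 (Measure.pi fun _ : Fin N => fairCoin)) :=
    lipschitzWith_expMean _ zero_le_one
  have hshift : Measurable fun x => expMean 1 (Measure.pi fun _ => fairCoin)
      (oneBodyField N β (fun _ => h) + √1 • x) :=
    hlip.continuous.measurable.comp (by fun_prop)
  simp only [ZSK, neg_mul_hamSK, log_sum_exp_eq_expMean]
  rw [gaussAvg, expMean_map (twoBodyField N β).continuous.measurable.aemeasurable hshift,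
    ← expMean_zero, add_comm]
  simp only [add_comm (N * Real.log 2), Real.sqrt_one, one_smul]
  exact expMean_add_const (hasExpMoments_affine hlip (gaussC N) (twoBodyField N β) _)

end ParisiRecursion

section OrderParameterIntegral

namespace OrderParam

variable (X : OrderParam)

lemma xFun_eq {a : ℕ} (ha : a < X.K) {r : ℝ} (hr : r ∈ Set.Ioo (X.q a) (X.q (a + 1))) :
    xFun X.K X.q X.m r = X.m (a + 1) := by
  have hr1 : r < 1 := hr.2.trans_le (X.q_le_one ha)
  have hleast : IsLeast {b | r < X.q b} (a + 1) :=
    ⟨hr.2, fun b hb => by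
      by_contra! hba
      exact (hr.1.trans hb).not_ge (X.q_mono (Nat.lt_succ_iff.1 hba) ha.le)⟩
  rw [xFun, if_neg hr1.not_ge, hleast.csInf_eq]

lemma integral_xFun : ∫ r in (0 : ℝ)..1, r * xFun X.K X.q X.m r
    = (∑ a ∈ Finset.range X.K, X.m (a + 1) * (X.q (a + 1) ^ 2 - X.q a ^ 2)) / 2 := by
  have hstep : ∀ a < X.K, Set.EqOn (fun r => r * xFun X.K X.q X.m r) (fun r => r * X.m (a + 1))
      (Set.Ioo (X.q a) (X.q (a + 1))) := fun a ha r hr => by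
    simp only [X.xFun_eq ha hr]
  have hint : ∀ a < X.K, IntervalIntegrable (fun r => r * xFun X.K X.q X.m r) volume
      (X.q a) (X.q (a + 1)) := fun a ha => by
    refine (Continuous.intervalIntegrable (by fun_prop) _ _).congr_uIoo
      (f := fun r => r * X.m (a + 1)) ?_
    rw [Set.uIoo_of_le (X.hq_mono a ha)]
    exact (hstep a ha).symm
  rw [← X.hq0, ← X.hqK, ← intervalIntegral.sum_integral_adjacent_intervals hint, Finset.sum_div]
  refine Finset.sum_congr rfl fun a ha => ?_
  rw [Finset.mem_range] at ha
  rw [intervalIntegral.integral_congr_Ioo_of_le (X.hq_mono a ha) (hstep a ha),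
    intervalIntegral.integral_mul_const, integral_id]
  ring

end OrderParam

lemma sum_range_sub_mul_add_sum_range_mul_sub {R : Type*} [CommRing R] (f g : ℕ → R) (n : ℕ) :
    ∑ a ∈ Finset.range (n + 1), (f (a + 1) - f a) * g a
      + ∑ a ∈ Finset.range n, f (a + 1) * (g (a + 1) - g a) = f (n + 1) * g n - f 0 * g 0 := by
  induction n with
  | zero => simp [sub_mul]
  | succ n ih =>
    rw [Finset.sum_range_succ, Finset.sum_range_succ (fun a => f (a + 1) * _)]
    linear_combination ih

lemma levelCost_quadratic (X : OrderParam) (d A B : ℝ) :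
    levelCost X d (fun a => A * X.q a ^ 2 + B) X.K
      = d + (A + B) / 2 - A * ∫ r in (0 : ℝ)..1, r * xFun X.K X.q X.m r := by
  have hreflect := Finset.sum_range_reflect
    (fun a => (X.m (a + 1) - X.m a) / 2 * (A * X.q a ^ 2 + B)) (X.K + 1)
  have hsplit : ∑ a ∈ Finset.range (X.K + 1), (X.m (a + 1) - X.m a) / 2 * (A * X.q a ^ 2 + B)
      = A / 2 * ∑ a ∈ Finset.range (X.K + 1), (X.m (a + 1) - X.m a) * X.q a ^ 2
        + B / 2 * ∑ a ∈ Finset.range (X.K + 1), (X.m (a + 1) - X.m a) := by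
    simp only [Finset.mul_sum, ← Finset.sum_add_distrib]
    exact Finset.sum_congr rfl fun _ _ => by ring
  have hparts := sum_range_sub_mul_add_sum_range_mul_sub X.m (fun a => X.q a ^ 2) X.K
  rw [X.hmtop, X.hm0, X.hqK] at hparts
  rw [Nat.add_sub_cancel, hsplit, Finset.sum_range_sub, X.hmtop, X.hm0] at hreflect
  rw [levelCost, hreflect, X.integral_xFun]
  linear_combination A / 2 * hparts

end OrderParameterIntegral

lemma gaussAvg_twoBodyField_le {N : ℕ} (hN : 1 ≤ N) (X : OrderParam) (β : ℝ) (w : Fin N → ℝ) :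
    gaussAvg 0 ((gaussC N).map (twoBodyField N β)) 1 (expMean 1 (Measure.pi fun _ => fairCoin))
        (oneBodyField N β w)
      ≤ ∑ i, parisiLevel X.K X.q X.m β X.K (w i)
        - N * (β ^ 2 / 2 * ∫ r in (0 : ℝ)..1, r * xFun X.K X.q X.m r) := by
  have hbound := gaussAvg_zero_le_levelFn_add_levelCost (X := X) (y := oneBodyField N β w)
    (μ := (gaussC N).map (twoBodyField N β)) (ν := (gaussN N).map (oneBodyField N β))
    (c := fun a => N * β ^ 2 / 2 * X.q a ^ 2 + β ^ 2 / 2)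
    convex_states isClosed_states (fun _ => nnnorm_le_one_of_mem_states)
    (hasGradientIn_states_expMean (Measure.pi fun _ => fairCoin) zero_le_one le_rfl) (by norm_num)
    (integral_id_map_eq_zero (integral_id_gaussC N) (twoBodyField N β))
    (integral_id_map_eq_zero (integral_id_gaussN N) (oneBodyField N β))
    (fun ε x hε => (gaussAvg_one_twoBodyField β hN _ hε x).le)
    (fun a _ p hp => mul_variance_oneBodyField_sub_le β hN hp (X.q a))
  rw [levelFn_oneBodyField β le_rfl, levelCost_quadratic] at hbound
  linarith

theorem guerra_bound_general (N : ℕ) (hN : 1 ≤ N) (X : OrderParam) (β h : ℝ) :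
    quenchedFE N β h ≤ trialAlpha X.K X.q X.m β h := by
  have hcomparison := gaussAvg_twoBodyField_le hN X β fun _ => h
  simp only [Finset.sum_const, Finset.card_univ, Fintype.card_fin, nsmul_eq_mul] at hcomparison
  rw [quenchedFE, trialAlpha, integral_log_ZSK, inv_mul_le_iff₀ (Nat.cast_pos.2 hN)]
  linarith

/-- Guerra's broken replica symmetry bound: for every `N ≥ 1`,
`β ≥ 0`, `h ∈ ℝ`, and every piecewise constant functional order parameter `x`,
`N⁻¹ E log Z_N(β, h, J) ≤ ᾱ(β, h; x)`. -/
theorem guerra_bound (N : ℕ) (hN : 1 ≤ N) (X : OrderParam) (β h : ℝ) (hβ : 0 ≤ β) :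
    quenchedFE N β h ≤ trialAlpha X.K X.q X.m β h :=
  guerra_bound_general N hN X β h

end
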